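/- There are polynomials P_{0,b,N} (1 ≤ b ≤ r) with coefficients uniformly bounded in N such that for every r ≥ 1 the following holds: if δ > 0 is small enough, then uniformly in k ∈ ℤ, ∫_{−δ}^{δ} e^{−itk} E(e^{itS_N}) dt = Σ_{b=1}^{r} σ_N^{−b} P_{0,b,N}((k − a_N)/σ_N) 𝔤((k − a_N)/σ_N) + o(σ_N^{−r}), where a_N = E(S_N) and 𝔤(u) = (2π)^{−1/2} e^{−u²/2}. -/

import Mathlib

open MeasureTheory ProbabilityTheory Filter Finset
open scoped ENNReal Topology

noncomputable section

namespace EdgeworthMC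

variable {Ω E : Type*} [MeasurableSpace Ω] [MeasurableSpace E]

/-- The standard Gaussian density `𝔤(u) = (2π)^{-1/2} e^{-u²/2}`. -/
def gaussDensity (u : ℝ) : ℝ := (Real.sqrt (2 * Real.pi))⁻¹ * Real.exp (-u ^ 2 / 2)

/-- `UEChain μ X κ C` : the process `X` is a Markov chain (with respect to the probability
measure `μ`) with transition kernels `κ n` from the state at time `n` to the state at time
`n+1`, and the chain is uniformly elliptic with ellipticity constant `C`:
`C⁻¹ ℙ(X_{n+1} ∈ A) ≤ ℙ(X_{n+1} ∈ A | X_n = x) ≤ C ℙ(X_{n+1} ∈ A)` for a.e. `x`. -/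
def UEChain (μ : Measure Ω) (X : ℕ → Ω → E) (κ : ℕ → Kernel E E) (C : ℝ) : Prop :=
  IsProbabilityMeasure μ ∧
  (∀ n, Measurable (X n)) ∧
  (∀ n, IsMarkovKernel (κ n)) ∧
  (∀ n (A : Set E), MeasurableSet A →
      (μ[fun ω => A.indicator (fun _ => (1 : ℝ)) (X (n + 1) ω) |
          ⨆ i : Fin (n + 1), MeasurableSpace.comap (X i) (inferInstance : MeasurableSpace E)]
        =ᵐ[μ] fun ω => (κ n (X n ω) A).toReal)) ∧
  (∀ n (A : Set E), MeasurableSet A → ∀ᵐ ω ∂μ,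
      κ n (X n ω) A ≤ ENNReal.ofReal C * Measure.map (X (n + 1)) μ A ∧
      Measure.map (X (n + 1)) μ A ≤ ENNReal.ofReal C * κ n (X n ω) A)

/-- Partial sums `S_N = ∑_{n=1}^N f_n(X_n)`. -/
def S (X : ℕ → Ω → E) (f : ℕ → E → ℤ) (N : ℕ) (ω : Ω) : ℤ :=
  ∑ n ∈ Finset.Icc 1 N, f n (X n ω)

/-- `V_N = Var(S_N)`. -/
def VN (μ : Measure Ω) (X : ℕ → Ω → E) (f : ℕ → E → ℤ) (N : ℕ) : ℝ :=
  variance (fun ω => ((S X f N ω : ℝ))) μ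

/-- `σ_N = √V_N`. -/
def sigN (μ : Measure Ω) (X : ℕ → Ω → E) (f : ℕ → E → ℤ) (N : ℕ) : ℝ :=
  Real.sqrt (VN μ X f N)

/-- `a_N = 𝔼(S_N)`. -/
def meanS (μ : Measure Ω) (X : ℕ → Ω → E) (f : ℕ → E → ℤ) (N : ℕ) : ℝ :=
  ∫ ω, ((S X f N ω : ℝ)) ∂μ

/-- The second largest value among the (finitely many) values of `p`, counted with
multiplicity: it equals `min_j max_{j' ≠ j} p j'`. -/
def secondLargest {ι : Type*} (p : ι → ℝ) : ℝ := ⨅ j, sSup (p '' {j}ᶜ)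

/-- `q_n(m)` : the second largest value among `ℙ(Y_n ≡ j mod m)`, `j = 0,…,m-1`. -/
def qres (μ : Measure Ω) (X : ℕ → Ω → E) (f : ℕ → E → ℤ) (n m : ℕ) : ℝ :=
  secondLargest (fun j : ZMod m => (μ {ω | ((f n (X n ω) : ZMod m)) = j}).toReal)

/-- `M_N = min_{2 ≤ m ≤ 2K} ∑_{n=1}^N q_n(m)`. -/
def MN (μ : Measure Ω) (X : ℕ → Ω → E) (f : ℕ → E → ℤ) (K N : ℕ) : ℝ :=
  sInf ((fun m => ∑ n ∈ Finset.Icc 1 N, qres μ X f n m) '' (Set.Icc 2 (2 * K)))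

/-- `S_N` obeys the Edgeworth expansion of order `r` : there are polynomials `P_{b,N}`,
with coefficients uniformly bounded in `N` and degrees not depending on `N`, such that
uniformly in `k ∈ ℤ`,
`ℙ(S_N = k) = ∑_{b=1}^r σ_N^{-b} P_{b,N}(k_N) 𝔤(k_N) + o(σ_N^{-r})`
where `k_N = (k - 𝔼 S_N)/σ_N`. -/
def Edgeworth (μ : Measure Ω) (X : ℕ → Ω → E) (f : ℕ → E → ℤ) (r : ℕ) : Prop :=
  ∃ (D : ℕ) (Cb : ℝ) (P : ℕ → ℕ → Polynomial ℝ),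
    (∀ b N, (P b N).natDegree ≤ D) ∧
    (∀ b N i, |(P b N).coeff i| ≤ Cb) ∧
    ∀ ε > 0, ∃ N₀, ∀ N ≥ N₀, ∀ k : ℤ,
      |(μ {ω | S X f N ω = k}).toReal -
          ∑ b ∈ Finset.Icc 1 r, (sigN μ X f N)⁻¹ ^ b *
            (P b N).eval (((k : ℝ) - meanS μ X f N) / sigN μ X f N) *
            gaussDensity (((k : ℝ) - meanS μ X f N) / sigN μ X f N)|
        ≤ ε * (sigN μ X f N)⁻¹ ^ r

/-- The σ-algebra generated by `X_{j 1}, …, X_{j ℓ}`. -/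
def sigmaOf (X : ℕ → Ω → E) {ℓ : ℕ} (j : Fin ℓ → ℕ) : MeasurableSpace Ω :=
  ⨆ i : Fin ℓ, MeasurableSpace.comap (X (j i)) (inferInstance : MeasurableSpace E)

/-- Conditional probability of the event `s` given the σ-algebra `m`. -/
def condProb (μ : Measure Ω) (m : MeasurableSpace Ω) (s : Set Ω) : Ω → ℝ :=
  μ[s.indicator (fun _ => (1 : ℝ)) | m]

/-- `S_N` obeys the Edgeworth expansion of order `r` in a conditionally stable way:
for every `ℓ`, the order `r` Edgeworth expansion holds for the conditional law of `S_N`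
given `X_{j_1},…,X_{j_ℓ}`, with error term `o_ℓ(σ_N^{-r})` and polynomial coefficient
bounds depending only on `ℓ` (and `r`), uniformly over all choices of indices
`1 ≤ j_1,…,j_ℓ ≤ N`. -/
def CondStableEdgeworth (μ : Measure Ω) (X : ℕ → Ω → E) (f : ℕ → E → ℤ) (r : ℕ) : Prop :=
  ∀ ℓ : ℕ, ∃ (D : ℕ) (Cb : ℝ), ∀ ε > 0, ∃ N₀, ∀ N ≥ N₀,
    ∀ j : Fin ℓ → ℕ, (∀ i, j i ∈ Finset.Icc 1 N) →
      ∃ P : ℕ → Ω → Polynomial ℝ,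
        (∀ b ω, (P b ω).natDegree ≤ D) ∧
        (∀ b ω i, |(P b ω).coeff i| ≤ Cb) ∧
        ∀ᵐ ω ∂μ, ∀ k : ℤ,
          |condProb μ (sigmaOf X j) {ω' | S X f N ω' = k} ω -
              ∑ b ∈ Finset.Icc 1 r, (sigN μ X f N)⁻¹ ^ b *
                (P b ω).eval (((k : ℝ) -
                    (μ[fun ω' => ((S X f N ω' : ℝ)) | sigmaOf X j]) ω) / sigN μ X f N) *
                gaussDensity (((k : ℝ) -
                    (μ[fun ω' => ((S X f N ω' : ℝ)) | sigmaOf X j]) ω) / sigN μ X f N)|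
            ≤ ε * (sigN μ X f N)⁻¹ ^ r

/-- `t` is a resonant point: `t = 2πl/m` with `0 < m ≤ 2K`, `0 ≤ l < m`. -/
def IsResonant (K : ℕ) (t : ℝ) : Prop :=
  ∃ l m : ℕ, 0 < m ∧ m ≤ 2 * K ∧ l < m ∧ t = 2 * Real.pi * l / m

/-- The conditional characteristic function `𝔼[e^{itS_N} | X_{j_1},…,X_{j_ℓ}]`. -/
def condChar (μ : Measure Ω) (X : ℕ → Ω → E) (f : ℕ → E → ℤ) (t : ℝ) (N : ℕ)
    {ℓ : ℕ} (j : Fin ℓ → ℕ) : Ω → ℂ :=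
  μ[fun ω => Complex.exp (Complex.I * (t : ℂ) * ((S X f N ω : ℤ) : ℂ)) | sigmaOf X j]

end EdgeworthMC

namespace EdgeworthMC

variable {Ω E : Type*} [MeasurableSpace Ω] [MeasurableSpace E]

/-!
The lower bound in uniform ellipticity contracts the centered `L²` space by a fixed factor at every
step of the chain. Hence `V_N` is comparable to the sum of the second moments of the centered
summands. The same contraction controls the conditional moment generating functions: on a fixed
complex disc their relative variance along the chain stays small, as each step multiplies it by a
factor less than one before the tilting adds a multiple of the second moment of one summand. The
ratios of successive moment generating functions thus stay near `1`, and the sum of their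
logarithms is holomorphic on that disc and bounded by a multiple of `V_N`. Its Taylor expansion at
`0` then reads `E exp(z(S_N - a_N)) = exp(V_N z² / 2 + V_N z³ q_N(z))` with `q_N` bounded uniformly
in `N`. Substituting `z = iu / σ_N` and expanding the second factor in powers of `σ_N⁻¹` leaves
Gaussian Fourier integrals of powers of `u`, which are Hermite polynomials times the Gaussian
density. The tail `|u| > δ σ_N` of these integrals is negligible, and so is the Taylor remainder,
because `|exp(V_N z³ q_N(z))| ≤ exp(u² / 4)` when `δ` is small.
-/

/-! ### Taylor expansions of holomorphic functions -/

/-- The remainder of order `n` in the Taylor expansion of `G` at `0`, divided by `z ^ n`. -/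
def taylorQuotient (G : ℂ → ℂ) (n : ℕ) : ℂ → ℂ := (Function.swap dslope 0)^[n] G

/-- `G` is holomorphic and bounded by `B` on the open disc of radius `ρ` around `0`. -/
structure IsBoundedHolomorphic (ρ B : ℝ) (G : ℂ → ℂ) : Prop where
  differentiableOn : DifferentiableOn ℂ G (Metric.ball 0 ρ)
  norm_le : ∀ z ∈ Metric.ball (0 : ℂ) ρ, ‖G z‖ ≤ B

lemma taylorQuotient_zero (G : ℂ → ℂ) : taylorQuotient G 0 = G := rfl

lemma taylorQuotient_succ (G : ℂ → ℂ) (n : ℕ) :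
    taylorQuotient G (n + 1) = dslope (taylorQuotient G n) 0 :=
  Function.iterate_succ_apply' _ n G

lemma eq_sum_add_pow_mul_taylorQuotient (G : ℂ → ℂ) (n : ℕ) (z : ℂ) :
    G z = ∑ l ∈ range n, taylorQuotient G l 0 * z ^ l + z ^ n * taylorQuotient G n z := by
  induction n with
  | zero => simp [taylorQuotient_zero]
  | succ n ih =>
    have h := sub_smul_dslope (taylorQuotient G n) 0 z
    simp only [sub_zero, smul_eq_mul] at h
    rw [sum_range_succ, taylorQuotient_succ, ih]
    linear_combination -z ^ n * h

lemma taylorQuotient_apply_zero {G : ℂ → ℂ} (hG : AnalyticAt ℂ G 0) (n : ℕ) :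
    taylorQuotient G n 0 = iteratedDeriv n G 0 / n.factorial := by
  have h := (hG.hasFPowerSeriesAt.has_fpower_series_iterate_dslope_fslope n).coeff_zero 1
  rw [taylorQuotient, ← h, ← FormalMultilinearSeries.coeff,
    FormalMultilinearSeries.coeff_iterate_fslope, zero_add, FormalMultilinearSeries.coeff_ofScalars]

namespace IsBoundedHolomorphic

variable {ρ B : ℝ} {G : ℂ → ℂ}

lemma mono {B' : ℝ} (hG : IsBoundedHolomorphic ρ B G) (hB : B ≤ B') :
    IsBoundedHolomorphic ρ B' G :=
  ⟨hG.differentiableOn, fun z hz => (hG.norm_le z hz).trans hB⟩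

lemma exists_eq_mul {V : ℝ} (hB : 0 ≤ B) (hV : 0 ≤ V) (hG : IsBoundedHolomorphic ρ (B * V) G) :
    ∃ q, IsBoundedHolomorphic ρ B q ∧ ∀ z ∈ Metric.ball (0 : ℂ) ρ, G z = V * q z := by
  rcases hV.eq_or_lt with rfl | hV
  · refine ⟨fun _ => 0, ⟨differentiableOn_const 0, fun _ _ => by simpa⟩, fun z hz => ?_⟩
    simpa using hG.norm_le z hz
  · have hV' : (V : ℂ) ≠ 0 := Complex.ofReal_ne_zero.2 hV.ne'
    refine ⟨fun z => G z / V, ⟨hG.differentiableOn.div_const _, fun z hz => ?_⟩,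
      fun z _ => (mul_div_cancel₀ _ hV').symm⟩
    rw [norm_div, Complex.norm_real, Real.norm_of_nonneg hV.le, div_le_iff₀ hV]
    exact hG.norm_le z hz

lemma pow (hG : IsBoundedHolomorphic ρ B G) (m : ℕ) :
    IsBoundedHolomorphic ρ (B ^ m) fun z => G z ^ m where
  differentiableOn := hG.differentiableOn.pow m
  norm_le z hz := by
    rw [norm_pow]
    exact pow_le_pow_left₀ (norm_nonneg _) (hG.norm_le z hz) m

protected lemma taylorQuotient (hG : IsBoundedHolomorphic ρ B G) (hρ : 0 < ρ) (n : ℕ) :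
    IsBoundedHolomorphic ρ (B * (2 / ρ) ^ n) (taylorQuotient G n) := by
  have h0 : (0 : ℂ) ∈ Metric.ball (0 : ℂ) ρ := Metric.mem_ball_self hρ
  induction n with
  | zero => simpa [taylorQuotient_zero] using hG
  | succ n ih =>
    rw [taylorQuotient_succ]
    refine ⟨(Complex.differentiableOn_dslope (Metric.isOpen_ball.mem_nhds h0)).2
      ih.differentiableOn, fun z hz => ?_⟩
    have hmaps : Set.MapsTo (taylorQuotient G n) (Metric.ball 0 ρ)
        (Metric.closedBall (taylorQuotient G n 0) (2 * (B * (2 / ρ) ^ n))) := by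
      intro w hw
      rw [mem_closedBall_iff_norm]
      linarith [norm_sub_le (taylorQuotient G n w) (taylorQuotient G n 0),
        ih.norm_le w hw, ih.norm_le 0 h0]
    refine (Complex.norm_dslope_le_div_of_mapsTo_ball ih.differentiableOn hmaps hz).trans_eq ?_
    rw [pow_succ]
    ring

end IsBoundedHolomorphic

lemma deriv_eq_div_of_exp_eq {U : Set ℂ} (hU : IsOpen U) {L φ φ₁ : ℂ → ℂ}
    (hL : DifferentiableOn ℂ L U) (hexp : ∀ z ∈ U, Complex.exp (L z) = φ z)
    (hφ : ∀ z, HasDerivAt φ (φ₁ z) z) {z : ℂ} (hz : z ∈ U) : deriv L z = φ₁ z / φ z := by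
  have hφ' : φ =ᶠ[𝓝 z] fun w => Complex.exp (L w) :=
    eventually_of_mem (hU.mem_nhds hz) fun w hw => (hexp w hw).symm
  have hexpL := (hL.differentiableAt (hU.mem_nhds hz)).hasDerivAt.cexp
  rw [(hφ z).unique (hexpL.congr_of_eventuallyEq hφ'), hexp z hz, mul_div_cancel_left₀]
  exact hexp z hz ▸ Complex.exp_ne_zero _

lemma log_eq_sq_add_cube_mul_taylorQuotient {ρ : ℝ} {V : ℂ} (hρ : 0 < ρ) {L φ φ₁ : ℂ → ℂ}
    (hL : DifferentiableOn ℂ L (Metric.ball 0 ρ)) (hL0 : L 0 = 0)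
    (hexp : ∀ z ∈ Metric.ball (0 : ℂ) ρ, Complex.exp (L z) = φ z)
    (hφ : ∀ z, HasDerivAt φ (φ₁ z) z) (hφ₁0 : φ₁ 0 = 0) (hφ₁ : HasDerivAt φ₁ V 0) (z : ℂ) :
    L z = V * z ^ 2 / 2 + z ^ 3 * taylorQuotient L 3 z := by
  have h0 : (0 : ℂ) ∈ Metric.ball (0 : ℂ) ρ := Metric.mem_ball_self hρ
  have hnhds : Metric.ball (0 : ℂ) ρ ∈ 𝓝 0 := Metric.isOpen_ball.mem_nhds h0
  have hφ0 : φ 0 = 1 := by rw [← hexp 0 h0, hL0, Complex.exp_zero]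
  have hderiv : ∀ w ∈ Metric.ball (0 : ℂ) ρ, deriv L w = φ₁ w / φ w := fun w hw =>
    deriv_eq_div_of_exp_eq Metric.isOpen_ball hL hexp hφ hw
  have hderiv2 : deriv (deriv L) 0 = V := by
    have heq : deriv L =ᶠ[𝓝 0] φ₁ / φ := eventually_of_mem hnhds hderiv
    rw [heq.deriv_eq,
      (hφ₁.div (hφ 0) (by simp [hφ0])).deriv]
    simp [hφ0, hφ₁0]
  have hcoeff := taylorQuotient_apply_zero (hL.analyticAt hnhds)
  have hcoeff1 : taylorQuotient L 1 0 = 0 := by simp [hcoeff, hderiv 0 h0, hφ₁0]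
  have hcoeff2 : taylorQuotient L 2 0 = V / 2 := by
    simp [hcoeff, iteratedDeriv_succ, hderiv2]
  rw [eq_sum_add_pow_mul_taylorQuotient L 3 z]
  simp only [sum_range_succ, sum_range_zero, hcoeff1, hcoeff2, taylorQuotient_zero, hL0]
  ring

/-! ### Gaussian integrals and Hermite polynomials -/

/-- The integrand of the Fourier transform of `e^{-u²/2}` at the frequency `x`. -/
def gaussFourier (x u : ℝ) : ℂ :=
  Complex.exp (-(Complex.I * u * x) - (u : ℂ) ^ 2 / 2)

lemma norm_gaussFourier (x u : ℝ) : ‖gaussFourier x u‖ = Real.exp (-u ^ 2 / 2) := by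
  rw [gaussFourier, Complex.norm_exp]
  congr 1
  simp [pow_two]
  ring

@[fun_prop]
lemma continuous_gaussFourier (x : ℝ) : Continuous (gaussFourier x) := by
  unfold gaussFourier
  fun_prop

lemma integrable_pow_mul_exp_neg_mul_sq {b : ℝ} (hb : 0 < b) (j : ℕ) :
    Integrable fun u : ℝ => u ^ j * Real.exp (-b * u ^ 2) := by
  simpa using integrable_rpow_mul_exp_neg_mul_sq hb (s := j) (by linarith [j.cast_nonneg (α := ℝ)])

lemma integrable_one_add_abs_pow_mul_exp {b : ℝ} (hb : 0 < b) (j : ℕ) :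
    Integrable fun u : ℝ => (1 + |u|) ^ j * Real.exp (-b * u ^ 2) := by
  have hbinom : (fun u : ℝ => (1 + |u|) ^ j * Real.exp (-b * u ^ 2)) = fun u =>
      ∑ i ∈ range (j + 1), (j.choose i : ℝ) * |u ^ (j - i) * Real.exp (-b * u ^ 2)| := by
    ext u
    rw [add_pow, sum_mul]
    refine sum_congr rfl fun i _ => ?_
    rw [abs_mul, abs_pow, abs_of_pos (Real.exp_pos _)]
    ring
  rw [hbinom]
  exact integrable_finsetSum _ fun i _ =>
    (integrable_pow_mul_exp_neg_mul_sq hb _).abs.const_mul _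

lemma norm_pow_mul_gaussFourier (j : ℕ) (x u : ℝ) :
    ‖(u : ℂ) ^ j * gaussFourier x u‖ = |u ^ j * Real.exp (-(1 / 2) * u ^ 2)| := by
  rw [norm_mul, norm_gaussFourier, norm_pow, Complex.norm_real, abs_mul, Real.abs_exp, abs_pow,
    Real.norm_eq_abs]
  congr 2
  ring

lemma integrable_pow_mul_gaussFourier (j : ℕ) (x : ℝ) :
    Integrable fun u : ℝ => (u : ℂ) ^ j * gaussFourier x u :=
  (integrable_pow_mul_exp_neg_mul_sq (b := 1 / 2) (by norm_num) j).mono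
    (by fun_prop) (.of_forall fun u => (norm_pow_mul_gaussFourier j x u).le)

lemma integral_gaussFourier (x : ℝ) :
    ∫ u, gaussFourier x u = (2 * Real.pi * gaussDensity x : ℝ) := by
  have hπ : (0 : ℝ) < 2 * Real.pi := by positivity
  have hsqrt : 2 * Real.pi * gaussDensity x =
      Real.sqrt (2 * Real.pi) * Real.exp (-x ^ 2 / 2) := by
    rw [gaussDensity, ← mul_assoc, ← div_eq_mul_inv, Real.div_sqrt]
  have hcpow : ((Real.pi : ℂ) / (1 / 2)) ^ (1 / 2 : ℂ) = (Real.sqrt (2 * Real.pi) : ℝ) := by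
    rw [Real.sqrt_eq_rpow, Complex.ofReal_cpow hπ.le]
    push_cast
    congr 1
    ring
  have hfactor : ∀ u : ℝ, gaussFourier x u =
      Complex.exp (Complex.I * -x * u) * Complex.exp (-(1 / 2) * (u : ℂ) ^ 2) := fun u => by
    rw [gaussFourier, ← Complex.exp_add]
    congr 1
    ring
  simp_rw [hfactor]
  rw [fourierIntegral_gaussian (by norm_num) (-x : ℂ), hcpow, hsqrt]
  push_cast
  congr 2
  ring

lemma hasDerivAt_gaussDensity (x : ℝ) : HasDerivAt gaussDensity (-x * gaussDensity x) x := by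
  have h : HasDerivAt (fun y : ℝ => -y ^ 2 / 2) (-x) x :=
    (((hasDerivAt_pow 2 x).neg).div_const 2).congr_deriv (by push_cast; ring)
  refine (h.exp.const_mul _).congr_deriv ?_
  rw [gaussDensity]
  ring

lemma hasDerivAt_hermite_mul_gaussDensity (j : ℕ) (x : ℝ) :
    HasDerivAt (fun y => Polynomial.aeval y (Polynomial.hermite j) * gaussDensity y)
      (-(Polynomial.aeval x (Polynomial.hermite (j + 1)) * gaussDensity x)) x := by
  refine (((Polynomial.hermite j).hasDerivAt_aeval x).mul
    (hasDerivAt_gaussDensity x)).congr_deriv ?_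
  rw [Polynomial.hermite_succ, map_sub, map_mul, Polynomial.aeval_X]
  ring

lemma hasDerivAt_integral_pow_mul_gaussFourier (j : ℕ) (x : ℝ) :
    HasDerivAt (fun y => ∫ u : ℝ, (u : ℂ) ^ j * gaussFourier y u)
      (∫ u : ℝ, -Complex.I * ((u : ℂ) ^ (j + 1) * gaussFourier x u)) x := by
  refine (hasDerivAt_integral_of_dominated_loc_of_deriv_le (s := Set.univ)
    (bound := fun u => |u ^ (j + 1) * Real.exp (-(1 / 2) * u ^ 2)|)
    (F' := fun y u => -Complex.I * ((u : ℂ) ^ (j + 1) * gaussFourier y u)) univ_mem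
    (.of_forall fun y => (integrable_pow_mul_gaussFourier j y).aestronglyMeasurable)
    (integrable_pow_mul_gaussFourier j x)
    ((integrable_pow_mul_gaussFourier (j + 1) x).const_mul _).aestronglyMeasurable
    (.of_forall fun u y _ => ?_)
    (integrable_pow_mul_exp_neg_mul_sq (by norm_num) _).abs (.of_forall fun u y _ => ?_)).2
  · rw [norm_mul, norm_neg, Complex.norm_I, one_mul, norm_pow_mul_gaussFourier]
  · have harg : HasDerivAt (fun y : ℝ => -(Complex.I * u * (y : ℂ)) - (u : ℂ) ^ 2 / 2)
        (-(Complex.I * u * 1)) y :=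
      (((hasDerivAt_id y).ofReal_comp.const_mul (Complex.I * u)).neg).sub_const _
    refine (harg.cexp.const_mul ((u : ℂ) ^ j)).congr_deriv ?_
    rw [gaussFourier]
    ring

lemma integral_pow_mul_gaussFourier (j : ℕ) (x : ℝ) :
    ∫ u : ℝ, (u : ℂ) ^ j * gaussFourier x u = 2 * Real.pi * (-Complex.I) ^ j *
      (Polynomial.aeval x (Polynomial.hermite j) * gaussDensity x : ℝ) := by
  induction j generalizing x with
  | zero => simp [integral_gaussFourier]
  | succ j ih =>
    have hderiv := hasDerivAt_integral_pow_mul_gaussFourier j x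
    simp_rw [ih, integral_const_mul] at hderiv
    have huniq := hderiv.unique
      ((hasDerivAt_hermite_mul_gaussDensity j x).ofReal_comp.const_mul _)
    rw [Complex.ofReal_neg] at huniq
    linear_combination Complex.I * huniq +
      (∫ u : ℝ, (u : ℂ) ^ (j + 1) * gaussFourier x u) * Complex.I_sq

/-! ### Edgeworth expansion of `exp (V z² / 2 + V z³ q(z))` -/

/-- The coefficients of the double expansion of `exp (s * q ζ)` in powers `s ^ m * ζ ^ l`. -/
def edgeCoeff (q : ℂ → ℂ) (m l : ℕ) : ℂ :=
  taylorQuotient (fun z => q z ^ m) l 0 / (m.factorial : ℂ)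

/-- The terms of degree less than `r` in the expansion of `exp (w (iu)³ q(iuw))` in powers
of `w`. -/
def edgeSum (q : ℂ → ℂ) (r : ℕ) (w u : ℝ) : ℂ :=
  ∑ m ∈ range r, ∑ l ∈ range (r - m),
    edgeCoeff q m l * (w : ℂ) ^ (m + l) * (Complex.I * u) ^ (3 * m + l)

/-- The polynomial multiplying `w ^ b 𝔤(x)` when `edgeSum` is integrated against `gaussFourier x`.
Only the real parts of the coefficients are kept: the integral being expanded is real. -/
def edgePoly (q : ℂ → ℂ) (b : ℕ) : Polynomial ℝ :=
  ∑ m ∈ range (b + 1), .C (2 * Real.pi * (edgeCoeff q m (b - m)).re) *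
    (Polynomial.hermite (2 * m + b)).map (Int.castRingHom ℝ)

lemma natDegree_edgePoly_le (q : ℂ → ℂ) (b : ℕ) : (edgePoly q b).natDegree ≤ 3 * b := by
  refine Polynomial.natDegree_sum_le_of_forall_le _ _ fun m hm => ?_
  refine (Polynomial.natDegree_C_mul_le _ _).trans (Polynomial.natDegree_map_le.trans ?_)
  rw [Polynomial.natDegree_hermite]
  have := mem_range.1 hm
  lia

lemma abs_pow_le_one_add_abs_pow (u : ℝ) {j k : ℕ} (h : j ≤ k) : |u| ^ j ≤ (1 + |u|) ^ k :=
  calc |u| ^ j ≤ (1 + |u|) ^ j := pow_le_pow_left₀ (abs_nonneg u) (by linarith) j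
    _ ≤ (1 + |u|) ^ k := pow_le_pow_right₀ (by linarith [abs_nonneg u]) h

lemma norm_div_factorial_le (z : ℂ) (m : ℕ) : ‖z / (m.factorial : ℂ)‖ ≤ ‖z‖ := by
  rw [norm_div, Complex.norm_natCast]
  exact div_le_self (norm_nonneg _) (by exact_mod_cast m.factorial_pos)

section EdgeExpansion

variable {ρ A : ℝ} {q : ℂ → ℂ}

lemma norm_taylorQuotient_pow_le (hρ : 0 < ρ) (hA : 2 / ρ ≤ A) (hq : IsBoundedHolomorphic ρ A q)
    (m l : ℕ) {z : ℂ} (hz : z ∈ Metric.ball (0 : ℂ) ρ) :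
    ‖taylorQuotient (fun z => q z ^ m) l z‖ ≤ A ^ (m + l) := by
  have h0 : 0 ≤ A := le_trans (by positivity) hA
  refine (((hq.pow m).taylorQuotient hρ l).norm_le z hz).trans ?_
  rw [pow_add]
  gcongr

lemma norm_edgeCoeff_le (hρ : 0 < ρ) (hA : 2 / ρ ≤ A) (hq : IsBoundedHolomorphic ρ A q)
    (m l : ℕ) : ‖edgeCoeff q m l‖ ≤ A ^ (m + l) :=
  (norm_div_factorial_le _ _).trans
    (norm_taylorQuotient_pow_le hρ hA hq m l (Metric.mem_ball_self hρ))

/-- An upper bound for the coefficients of `edgePoly q b` when `q` is bounded by `A`. -/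
def edgePolyBound (A : ℝ) (b : ℕ) : ℝ :=
  ∑ m ∈ range (b + 1), 2 * Real.pi * A ^ b *
    ((Polynomial.hermite (2 * m + b)).map (Int.castRingHom ℝ)).supNorm

lemma abs_coeff_edgePoly_le (hρ : 0 < ρ) (hA : 2 / ρ ≤ A) (hq : IsBoundedHolomorphic ρ A q)
    (b i : ℕ) : |(edgePoly q b).coeff i| ≤ edgePolyBound A b := by
  have h0 : 0 ≤ A := le_trans (by positivity) hA
  rw [edgePoly, Polynomial.finsetSum_coeff]
  refine (abs_sum_le_sum_abs _ _).trans (sum_le_sum fun m hm => ?_)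
  rw [Polynomial.coeff_C_mul, abs_mul, abs_mul, abs_of_pos (by positivity : 0 < 2 * Real.pi)]
  gcongr
  · have hb : m + (b - m) = b := by have := mem_range.1 hm; lia
    exact (Complex.abs_re_le_norm _).trans
      ((norm_edgeCoeff_le hρ hA hq m (b - m)).trans_eq (by rw [hb]))
  · rw [← Real.norm_eq_abs]
    exact Polynomial.le_supNorm _ i

lemma norm_exp_mul_sub_sum_le (hA : 0 < A) (r : ℕ) {w u : ℝ} (hw : 0 < w)
    (hu : |u| * w ≤ 1 / (4 * A)) {a : ℂ} (ha : ‖a‖ ≤ A) :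
    ‖Complex.exp (w * (Complex.I * u) ^ 3 * a) -
        ∑ m ∈ range r, (w * (Complex.I * u) ^ 3 * a) ^ m / (m.factorial : ℂ)‖ ≤
      A ^ r * w ^ r * (1 + |u|) ^ (5 * r) * Real.exp (u ^ 2 / 4) := by
  set y : ℂ := w * (Complex.I * u) ^ 3 * a with hy
  have hnorm : ‖y‖ ≤ w * |u| ^ 3 * A := by
    simp only [hy, norm_mul, norm_pow, Complex.norm_I, Complex.norm_real, Real.norm_eq_abs,
      abs_of_pos hw, one_mul]
    gcongr
  have hnorm_sq : ‖y‖ ≤ u ^ 2 / 4 :=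
    calc ‖y‖ ≤ (|u| * w) * (u ^ 2 * A) := hnorm.trans_eq (by rw [← sq_abs u]; ring)
      _ ≤ 1 / (4 * A) * (u ^ 2 * A) := by gcongr
      _ = u ^ 2 / 4 := by field_simp
  calc _ ≤ ‖y‖ ^ r * Real.exp ‖y‖ := Complex.norm_exp_sub_sum_le_norm_mul_exp y r
    _ ≤ (w * |u| ^ 3 * A) ^ r * Real.exp (u ^ 2 / 4) := by gcongr
    _ = A ^ r * w ^ r * |u| ^ (3 * r) * Real.exp (u ^ 2 / 4) := by rw [pow_mul]; ring
    _ ≤ _ := by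
      gcongr
      exact abs_pow_le_one_add_abs_pow u (by lia)

lemma pow_div_factorial_sub_sum_edgeCoeff (q : ℂ → ℂ) (m n : ℕ) (w u : ℝ) :
    (w * (Complex.I * u) ^ 3 * q (Complex.I * u * w)) ^ m / (m.factorial : ℂ) -
        ∑ l ∈ range n, edgeCoeff q m l * (w : ℂ) ^ (m + l) * (Complex.I * u) ^ (3 * m + l) =
      (w : ℂ) ^ (m + n) * (Complex.I * u) ^ (3 * m + n) *
        taylorQuotient (fun z => q z ^ m) n (Complex.I * u * w) / (m.factorial : ℂ) := by
  have hexp := eq_sum_add_pow_mul_taylorQuotient (fun z => q z ^ m) n (Complex.I * u * w)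
  rw [mul_pow, mul_pow, hexp, ← pow_mul, sub_eq_iff_eq_add, mul_add, add_div, add_comm, mul_sum,
    sum_div]
  congr 1
  · ring
  · refine sum_congr rfl fun l _ => ?_
    rw [edgeCoeff]
    ring

lemma norm_pow_div_factorial_sub_sum_edgeCoeff_le (hρ : 0 < ρ) (hA : 2 / ρ ≤ A)
    (hq : IsBoundedHolomorphic ρ A q) (m n : ℕ) {w u : ℝ} (hw : 0 < w) (hu : |u| * w < ρ) :
    ‖(w * (Complex.I * u) ^ 3 * q (Complex.I * u * w)) ^ m / (m.factorial : ℂ) -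
        ∑ l ∈ range n, edgeCoeff q m l * (w : ℂ) ^ (m + l) * (Complex.I * u) ^ (3 * m + l)‖ ≤
      A ^ (m + n) * w ^ (m + n) * |u| ^ (3 * m + n) := by
  rw [pow_div_factorial_sub_sum_edgeCoeff]
  refine (norm_div_factorial_le _ _).trans ?_
  have hball : Complex.I * u * w ∈ Metric.ball (0 : ℂ) ρ := by simpa [abs_of_pos hw] using hu
  simp only [norm_mul, norm_pow, Complex.norm_I, Complex.norm_real, Real.norm_eq_abs,
    abs_of_pos hw, one_mul]
  calc _ ≤ w ^ (m + n) * |u| ^ (3 * m + n) * A ^ (m + n) := by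
        gcongr
        exact norm_taylorQuotient_pow_le hρ hA hq m n hball
    _ = _ := by ring

lemma norm_exp_sub_edgeSum_le (hρ : 0 < ρ) (hA : 2 / ρ ≤ A) (hq : IsBoundedHolomorphic ρ A q)
    (r : ℕ) {w u : ℝ} (hw : 0 < w) (huρ : |u| * w < ρ) (huA : |u| * w ≤ 1 / (4 * A)) :
    ‖Complex.exp (w * (Complex.I * u) ^ 3 * q (Complex.I * u * w)) - edgeSum q r w u‖ ≤
      (r + 1) * A ^ r * w ^ r * (1 + |u|) ^ (5 * r) * Real.exp (u ^ 2 / 4) := by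
  have hA0 : 0 < A := lt_of_lt_of_le (by positivity) hA
  set y : ℂ := w * (Complex.I * u) ^ 3 * q (Complex.I * u * w)
  have hpow : ∀ m ∈ range r, ‖y ^ m / (m.factorial : ℂ) - ∑ l ∈ range (r - m),
      edgeCoeff q m l * (w : ℂ) ^ (m + l) * (Complex.I * u) ^ (3 * m + l)‖ ≤
      A ^ r * w ^ r * (1 + |u|) ^ (5 * r) * Real.exp (u ^ 2 / 4) := fun m hm => by
    have hr : m + (r - m) = r := by have := mem_range.1 hm; lia
    refine (norm_pow_div_factorial_sub_sum_edgeCoeff_le hρ hA hq m (r - m) hw huρ).trans ?_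
    rw [hr, ← mul_one (A ^ r * w ^ r * |u| ^ _)]
    gcongr
    · exact abs_pow_le_one_add_abs_pow u (by lia)
    · exact Real.one_le_exp (by positivity)
  have hsum : ‖∑ m ∈ range r, y ^ m / (m.factorial : ℂ) - edgeSum q r w u‖ ≤
      r * (A ^ r * w ^ r * (1 + |u|) ^ (5 * r) * Real.exp (u ^ 2 / 4)) := by
    rw [edgeSum, ← sum_sub_distrib]
    exact ((norm_sum_le _ _).trans (sum_le_card_nsmul _ _ _ hpow)).trans (by simp)
  have hball : Complex.I * u * w ∈ Metric.ball (0 : ℂ) ρ := by simpa [abs_of_pos hw] using huρ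
  have hexp := norm_exp_mul_sub_sum_le hA0 r hw huA (hq.norm_le _ hball)
  calc _ ≤ _ := norm_sub_le_norm_sub_add_norm_sub _ (∑ m ∈ range r, y ^ m / (m.factorial : ℂ)) _
    _ ≤ _ := add_le_add hexp hsum
    _ = _ := by ring

lemma norm_edgeSum_le_sq_mul (hρ : 0 < ρ) (hA : 2 / ρ ≤ A) (hA1 : 1 ≤ A)
    (hq : IsBoundedHolomorphic ρ A q) (r : ℕ) {w : ℝ} (hw : 0 < w) (hw1 : w ≤ 1) (u : ℝ) :
    ‖edgeSum q r w u‖ ≤ r * (r * (A ^ r * (1 + |u|) ^ (4 * r))) := by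
  have hterm : ∀ m ∈ range r, ∀ l ∈ range (r - m),
      ‖edgeCoeff q m l * (w : ℂ) ^ (m + l) * (Complex.I * u) ^ (3 * m + l)‖ ≤
        A ^ r * (1 + |u|) ^ (4 * r) := fun m hm l hl => by
    have hm := mem_range.1 hm
    have hl := mem_range.1 hl
    simp only [norm_mul, norm_pow, Complex.norm_I, Complex.norm_real, Real.norm_eq_abs,
      abs_of_pos hw, one_mul]
    calc _ ≤ A ^ (m + l) * 1 * (1 + |u|) ^ (4 * r) := by
          gcongr
          · exact norm_edgeCoeff_le hρ hA hq m l
          · exact pow_le_one₀ hw.le hw1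
          · exact abs_pow_le_one_add_abs_pow u (by lia)
      _ ≤ A ^ r * (1 + |u|) ^ (4 * r) := by
          rw [mul_one]
          gcongr
          lia
  have hinner : ∀ m ∈ range r, ‖∑ l ∈ range (r - m),
      edgeCoeff q m l * (w : ℂ) ^ (m + l) * (Complex.I * u) ^ (3 * m + l)‖ ≤
        r * (A ^ r * (1 + |u|) ^ (4 * r)) := fun m hm => by
    refine ((norm_sum_le _ _).trans (sum_le_card_nsmul _ _ _ (hterm m hm))).trans ?_
    rw [card_range, nsmul_eq_mul]
    gcongr
    exact_mod_cast Nat.sub_le r m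
  exact ((norm_sum_le _ _).trans (sum_le_card_nsmul _ _ _ hinner)).trans (by simp)

lemma norm_edgeSum_le (hρ : 0 < ρ) (hA : 2 / ρ ≤ A) (hA1 : 1 ≤ A)
    (hq : IsBoundedHolomorphic ρ A q) (r : ℕ) {w u δ : ℝ} (hw : 0 < w) (hw1 : w ≤ 1)
    (hδ : 0 < δ) (hu : δ ≤ |u| * w) :
    ‖edgeSum q r w u‖ ≤
      r * r * A ^ r / δ ^ r * w ^ r * (1 + |u|) ^ (5 * r) * Real.exp (u ^ 2 / 4) := by
  have hexp : 1 ≤ Real.exp (u ^ 2 / 4) := Real.one_le_exp (by positivity)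
  have hratio : 1 ≤ ((1 + |u|) * w / δ) ^ r := by
    refine one_le_pow₀ ?_
    rw [le_div_iff₀ hδ]
    nlinarith
  calc ‖edgeSum q r w u‖ ≤ r * (r * (A ^ r * (1 + |u|) ^ (4 * r))) * 1 * 1 := by
        simpa only [mul_one] using norm_edgeSum_le_sq_mul hρ hA hA1 hq r hw hw1 u
    _ ≤ r * (r * (A ^ r * (1 + |u|) ^ (4 * r))) * ((1 + |u|) * w / δ) ^ r *
        Real.exp (u ^ 2 / 4) := by gcongr
    _ = _ := by
      rw [div_pow, mul_pow, show 5 * r = 4 * r + r by ring, pow_add (1 + |u|)]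
      ring

end EdgeExpansion

lemma edgeSum_eq_sum_pow (q : ℂ → ℂ) (r : ℕ) (w u : ℝ) :
    edgeSum q r w u = ∑ b ∈ range r, ∑ m ∈ range (b + 1),
      (w : ℂ) ^ b * edgeCoeff q m (b - m) * (Complex.I * u) ^ (2 * m + b) := by
  rw [edgeSum, ← sum_range_diag_flip r fun m l =>
    edgeCoeff q m l * (w : ℂ) ^ (m + l) * (Complex.I * u) ^ (3 * m + l)]
  refine sum_congr rfl fun b _ => sum_congr rfl fun m hm => ?_
  have hm := mem_range.1 hm
  rw [show m + (b - m) = b by lia, show 3 * m + (b - m) = 2 * m + b by lia]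
  ring

lemma integrable_gaussFourier_mul_I_mul_pow (j : ℕ) (x : ℝ) :
    Integrable fun u : ℝ => gaussFourier x u * (Complex.I * u) ^ j := by
  simp_rw [mul_pow, mul_left_comm (gaussFourier x _), mul_comm (gaussFourier x _)]
  exact (integrable_pow_mul_gaussFourier j x).const_mul _

lemma integral_gaussFourier_mul_I_mul_pow (j : ℕ) (x : ℝ) :
    ∫ u : ℝ, gaussFourier x u * (Complex.I * u) ^ j =
      (2 * Real.pi * (Polynomial.aeval x (Polynomial.hermite j) * gaussDensity x) : ℝ) := by
  have hI : Complex.I ^ j * (-Complex.I) ^ j = 1 := by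
    rw [← mul_pow, mul_neg, Complex.I_mul_I, neg_neg, one_pow]
  simp_rw [mul_pow, mul_left_comm (gaussFourier x _), mul_comm (gaussFourier x _)]
  rw [integral_const_mul, integral_pow_mul_gaussFourier]
  push_cast
  linear_combination (2 * Real.pi * ((Polynomial.aeval x (Polynomial.hermite j) : ℝ) *
    gaussDensity x) : ℂ) * hI

section

variable (q : ℂ → ℂ) (r : ℕ) (w x : ℝ)

lemma gaussFourier_mul_edgeSum (u : ℝ) :
    gaussFourier x u * edgeSum q r w u = ∑ b ∈ range r, ∑ m ∈ range (b + 1),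
      (w : ℂ) ^ b * edgeCoeff q m (b - m) * (gaussFourier x u * (Complex.I * u) ^ (2 * m + b)) := by
  simp_rw [edgeSum_eq_sum_pow, mul_sum, mul_left_comm (gaussFourier x u)]

lemma integrable_gaussFourier_mul_edgeSum :
    Integrable fun u : ℝ => gaussFourier x u * edgeSum q r w u := by
  simp_rw [gaussFourier_mul_edgeSum]
  exact integrable_finsetSum _ fun b _ => integrable_finsetSum _ fun m _ =>
    (integrable_gaussFourier_mul_I_mul_pow _ x).const_mul _

lemma re_integral_gaussFourier_mul_edgeSum :
    (∫ u : ℝ, gaussFourier x u * edgeSum q r w u).re =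
      ∑ b ∈ range r, w ^ b * (edgePoly q b).eval x * gaussDensity x := by
  have hint : ∀ b m, Integrable fun u : ℝ => (w : ℂ) ^ b * edgeCoeff q m (b - m) *
      (gaussFourier x u * (Complex.I * u) ^ (2 * m + b)) := fun b m =>
    (integrable_gaussFourier_mul_I_mul_pow _ x).const_mul _
  simp_rw [gaussFourier_mul_edgeSum]
  rw [integral_finsetSum _ fun b _ => integrable_finsetSum _ fun m _ => hint b m, Complex.re_sum]
  refine sum_congr rfl fun b _ => ?_
  rw [integral_finsetSum _ fun m _ => hint b m, Complex.re_sum, edgePoly,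
    Polynomial.eval_finsetSum, mul_sum, sum_mul]
  refine sum_congr rfl fun m _ => ?_
  rw [integral_const_mul, integral_gaussFourier_mul_I_mul_pow, Complex.re_mul_ofReal,
    ← Complex.ofReal_pow, Complex.re_ofReal_mul, Polynomial.eval_mul, Polynomial.eval_C,
    Polynomial.eval_map, Polynomial.aeval_def, algebraMap_int_eq]
  ring

end

lemma intervalIntegral_exp_eq_inv_mul {σ : ℝ} (hσ : 0 < σ) (q : ℂ → ℂ) (δ x : ℝ) :
    ∫ t in (-δ)..δ, Complex.exp (-(Complex.I * t * (σ * x : ℝ))) *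
        Complex.exp (σ ^ 2 * (Complex.I * t) ^ 2 / 2 +
          σ ^ 2 * (Complex.I * t) ^ 3 * q (Complex.I * t)) =
      (σ⁻¹ : ℝ) * ∫ u in (-(δ * σ))..(δ * σ), gaussFourier x u *
        Complex.exp ((σ⁻¹ : ℝ) * (Complex.I * u) ^ 3 * q (Complex.I * u * (σ⁻¹ : ℝ))) := by
  have hσC : (σ : ℂ) ≠ 0 := by exact_mod_cast hσ.ne'
  set G : ℝ → ℂ := fun t => Complex.exp (-(Complex.I * t * (σ * x : ℝ))) *
    Complex.exp (σ ^ 2 * (Complex.I * t) ^ 2 / 2 +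
      σ ^ 2 * (Complex.I * t) ^ 3 * q (Complex.I * t)) with hG
  have hscale : ∀ u : ℝ, gaussFourier x u *
      Complex.exp ((σ⁻¹ : ℝ) * (Complex.I * u) ^ 3 * q (Complex.I * u * (σ⁻¹ : ℝ))) =
      G (u / σ) := fun u => by
    have harg : ((u / σ : ℝ) : ℂ) = u * (σ⁻¹ : ℝ) := by push_cast; rw [div_eq_mul_inv]
    simp only [gaussFourier, hG, harg]
    rw [← Complex.exp_add, ← Complex.exp_add, ← mul_assoc]
    congr 1
    push_cast
    field_simp
    linear_combination (-u ^ 2 * σ : ℂ) * Complex.I_sq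
  simp_rw [hscale]
  rw [intervalIntegral.integral_comp_div G hσ.ne', neg_div, mul_div_cancel_right₀ _ hσ.ne',
    Complex.real_smul, ← mul_assoc, ← Complex.ofReal_mul, inv_mul_cancel₀ hσ.ne',
    Complex.ofReal_one, one_mul]

section EdgeExpansion

variable {ρ A : ℝ} {q : ℂ → ℂ}

lemma integrable_indicator_gaussFourier_mul_exp (hq : IsBoundedHolomorphic ρ A q) {w R : ℝ}
    (hw : 0 < w) (hR : R * w < ρ) (x : ℝ) :
    Integrable ((Set.Ioc (-R) R).indicator fun u => gaussFourier x u *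
      Complex.exp (w * (Complex.I * u) ^ 3 * q (Complex.I * u * w))) := by
  rw [integrable_indicator_iff measurableSet_Ioc]
  refine (ContinuousOn.integrableOn_Icc ?_).mono_set Set.Ioc_subset_Icc_self
  refine ContinuousOn.mul (by fun_prop) (ContinuousOn.cexp (ContinuousOn.mul (by fun_prop) ?_))
  refine hq.differentiableOn.continuousOn.comp (by fun_prop) fun u hu => ?_
  have hu : |u| * w < ρ := by
    calc |u| * w ≤ R * w := by gcongr; exact abs_le.2 hu
      _ < ρ := hR
  simpa [abs_of_pos hw] using hu

/-- The constant in front of `σ ^ (-(r + 1))` in the error term of the Edgeworth expansion. -/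
def edgeErrorConst (A δ : ℝ) (r : ℕ) : ℝ := (r + 1) * A ^ r + r * r * A ^ r / δ ^ r

lemma norm_indicator_gaussFourier_mul_exp_sub_le (hρ : 0 < ρ) (hA : 2 / ρ ≤ A) (hA1 : 1 ≤ A)
    (hq : IsBoundedHolomorphic ρ A q) (r : ℕ) {δ w R : ℝ} (hδ : 0 < δ) (hδρ : δ < ρ)
    (hδA : δ ≤ 1 / (4 * A)) (hw : 0 < w) (hw1 : w ≤ 1) (hR : R * w = δ) (x u : ℝ) :
    ‖(Set.Ioc (-R) R).indicator (fun u : ℝ => gaussFourier x u *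
        Complex.exp (w * (Complex.I * u) ^ 3 * q (Complex.I * u * w))) u -
      gaussFourier x u * edgeSum q r w u‖ ≤
      edgeErrorConst A δ r * w ^ r * ((1 + |u|) ^ (5 * r) * Real.exp (-(1 / 4) * u ^ 2)) := by
  have hexp : Real.exp (-(1 / 4) * u ^ 2) = Real.exp (-u ^ 2 / 2) * Real.exp (u ^ 2 / 4) := by
    rw [← Real.exp_add]
    congr 1
    ring
  rw [edgeErrorConst, hexp]
  by_cases hu : u ∈ Set.Ioc (-R) R
  · have huw : |u| * w ≤ δ := by
      rw [← hR]
      gcongr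
      exact abs_le.2 ⟨hu.1.le, hu.2⟩
    rw [Set.indicator_of_mem hu, ← mul_sub, norm_mul, norm_gaussFourier]
    calc _ ≤ Real.exp (-u ^ 2 / 2) *
          ((r + 1) * A ^ r * w ^ r * (1 + |u|) ^ (5 * r) * Real.exp (u ^ 2 / 4)) := by
          gcongr
          exact norm_exp_sub_edgeSum_le hρ hA hq r hw (huw.trans_lt hδρ) (huw.trans hδA)
      _ = ((r + 1) * A ^ r + 0) * w ^ r *
          ((1 + |u|) ^ (5 * r) * (Real.exp (-u ^ 2 / 2) * Real.exp (u ^ 2 / 4))) := by ring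
      _ ≤ _ := by gcongr; positivity
  · have huw : δ ≤ |u| * w := by
      rw [← hR]
      gcongr
      by_contra! h
      exact hu ⟨(abs_lt.1 h).1, (abs_lt.1 h).2.le⟩
    rw [Set.indicator_of_notMem hu, zero_sub, norm_neg, norm_mul, norm_gaussFourier]
    calc _ ≤ Real.exp (-u ^ 2 / 2) *
          (r * r * A ^ r / δ ^ r * w ^ r * (1 + |u|) ^ (5 * r) * Real.exp (u ^ 2 / 4)) := by
          gcongr
          exact norm_edgeSum_le hρ hA hA1 hq r hw hw1 hδ huw
      _ = (0 + r * r * A ^ r / δ ^ r) * w ^ r *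
          ((1 + |u|) ^ (5 * r) * (Real.exp (-u ^ 2 / 2) * Real.exp (u ^ 2 / 4))) := by ring
      _ ≤ _ := by gcongr; positivity

lemma norm_intervalIntegral_sub_integral_edgeSum_le (hρ : 0 < ρ) (hA : 2 / ρ ≤ A) (hA1 : 1 ≤ A)
    (hq : IsBoundedHolomorphic ρ A q) (r : ℕ) {δ σ : ℝ} (hδ : 0 < δ) (hδρ : δ < ρ)
    (hδA : δ ≤ 1 / (4 * A)) (hσ : 1 ≤ σ) (x : ℝ) :
    ‖(∫ t in (-δ)..δ, Complex.exp (-(Complex.I * t * (σ * x : ℝ))) *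
        Complex.exp (σ ^ 2 * (Complex.I * t) ^ 2 / 2 +
          σ ^ 2 * (Complex.I * t) ^ 3 * q (Complex.I * t))) -
      (σ⁻¹ : ℝ) * ∫ u : ℝ, gaussFourier x u * edgeSum q r σ⁻¹ u‖ ≤
    edgeErrorConst A δ r * (∫ u : ℝ, (1 + |u|) ^ (5 * r) * Real.exp (-(1 / 4) * u ^ 2)) *
      σ⁻¹ ^ (r + 1) := by
  have hσ0 : 0 < σ := by linarith
  have hw : 0 < σ⁻¹ := inv_pos.2 hσ0
  have hR : δ * σ * σ⁻¹ = δ := mul_inv_cancel_right₀ hσ0.ne' δ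
  have hbound := norm_integral_le_of_norm_le
    ((integrable_one_add_abs_pow_mul_exp (b := 1 / 4) (by norm_num) (5 * r)).const_mul _)
    (.of_forall (norm_indicator_gaussFourier_mul_exp_sub_le hρ hA hA1 hq r hδ hδρ hδA hw
      (inv_le_one_of_one_le₀ hσ) hR x))
  rw [integral_sub (integrable_indicator_gaussFourier_mul_exp hq hw (hR.trans_lt hδρ) x)
    (integrable_gaussFourier_mul_edgeSum q r _ x), integral_indicator measurableSet_Ioc,
    integral_const_mul] at hbound
  rw [intervalIntegral_exp_eq_inv_mul hσ0, intervalIntegral.integral_of_le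
    (by linarith [mul_pos hδ hσ0]), ← mul_sub, norm_mul, Complex.norm_real,
    Real.norm_of_nonneg hw.le]
  calc _ ≤ _ := mul_le_mul_of_nonneg_left hbound hw.le
    _ = _ := by ring

end EdgeExpansion

lemma conj_intervalIntegral_neg_self {F : ℝ → ℂ} (hF : ∀ t, starRingEnd ℂ (F t) = F (-t))
    (δ : ℝ) : starRingEnd ℂ (∫ t in (-δ)..δ, F t) = ∫ t in (-δ)..δ, F t := by
  have hconj : starRingEnd ℂ (∫ t in (-δ)..δ, F t) = ∫ t in (-δ)..δ, starRingEnd ℂ (F t) := by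
    simp only [intervalIntegral, map_sub, integral_conj]
  rw [hconj]
  simp_rw [hF]
  simp [intervalIntegral.integral_comp_neg]

lemma norm_sub_re_le {z w : ℂ} (hz : starRingEnd ℂ z = z) : ‖z - (w.re : ℂ)‖ ≤ ‖z - w‖ := by
  rw [← Complex.conj_eq_iff_re.1 hz, ← Complex.ofReal_sub, Complex.norm_real, Real.norm_eq_abs]
  simpa using Complex.abs_re_le_norm ((z.re : ℂ) - w)

section CharFun

variable (μ : Measure Ω) (T : Ω → ℝ)

lemma conj_intervalIntegral_exp_mul_charFun (δ k : ℝ) :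
    starRingEnd ℂ (∫ t in (-δ)..δ, Complex.exp (-(Complex.I * (t : ℂ) * (k : ℂ))) *
        ∫ ω, Complex.exp (Complex.I * (t : ℂ) * (T ω : ℂ)) ∂μ) =
      ∫ t in (-δ)..δ, Complex.exp (-(Complex.I * (t : ℂ) * (k : ℂ))) *
        ∫ ω, Complex.exp (Complex.I * (t : ℂ) * (T ω : ℂ)) ∂μ := by
  refine conj_intervalIntegral_neg_self (fun t => ?_) δ
  rw [map_mul, ← integral_conj]
  simp_rw [← Complex.exp_conj]
  simp

lemma exp_mul_integral_exp_eq (a k : ℝ) (z : ℂ) :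
    Complex.exp (-(z * k)) * ∫ ω, Complex.exp (z * (T ω : ℂ)) ∂μ =
      Complex.exp (-(z * (k - a : ℝ))) * ∫ ω, Complex.exp (z * ((T ω - a : ℝ) : ℂ)) ∂μ := by
  simp_rw [← integral_const_mul, ← Complex.exp_add]
  congr! 3 with ω
  push_cast
  ring

variable {μ T} {ρ A : ℝ} {q : ℂ → ℂ}

lemma norm_intervalIntegral_charFun_sub_edgeworth_le (hρ : 0 < ρ) (hA : 2 / ρ ≤ A) (hA1 : 1 ≤ A)
    (hq : IsBoundedHolomorphic ρ A q) {a σ : ℝ} (hσ : 1 ≤ σ)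
    (hT : ∀ z ∈ Metric.ball (0 : ℂ) ρ, ∫ ω, Complex.exp (z * ((T ω - a : ℝ) : ℂ)) ∂μ =
      Complex.exp (σ ^ 2 * z ^ 2 / 2 + σ ^ 2 * z ^ 3 * q z))
    (r : ℕ) {δ : ℝ} (hδ : 0 < δ) (hδρ : δ < ρ) (hδA : δ ≤ 1 / (4 * A)) (k : ℝ) :
    ‖(∫ t in (-δ)..δ, Complex.exp (-(Complex.I * (t : ℂ) * (k : ℂ))) *
          ∫ ω, Complex.exp (Complex.I * (t : ℂ) * (T ω : ℂ)) ∂μ) -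
        ((∑ b ∈ Icc 1 r, σ⁻¹ ^ b * (edgePoly q (b - 1)).eval ((k - a) / σ) *
          gaussDensity ((k - a) / σ) : ℝ) : ℂ)‖ ≤
      edgeErrorConst A δ r * (∫ u : ℝ, (1 + |u|) ^ (5 * r) * Real.exp (-(1 / 4) * u ^ 2)) *
        σ⁻¹ ^ (r + 1) := by
  set x := (k - a) / σ
  have hx : k - a = σ * x := (mul_div_cancel₀ _ (by linarith : σ ≠ 0)).symm
  have hsum : ∑ b ∈ Icc 1 r, σ⁻¹ ^ b * (edgePoly q (b - 1)).eval x * gaussDensity x =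
      ((σ⁻¹ : ℝ) * ∫ u : ℝ, gaussFourier x u * edgeSum q r σ⁻¹ u).re := by
    rw [Complex.re_ofReal_mul, re_integral_gaussFourier_mul_edgeSum, mul_sum,
      ← Ico_add_one_right_eq_Icc, sum_Ico_eq_sum_range]
    refine sum_congr rfl fun b _ => ?_
    rw [Nat.add_sub_cancel_left]
    ring
  have hchar : Set.EqOn
      (fun t : ℝ => Complex.exp (-(Complex.I * (t : ℂ) * (k : ℂ))) *
        ∫ ω, Complex.exp (Complex.I * (t : ℂ) * (T ω : ℂ)) ∂μ)
      (fun t : ℝ => Complex.exp (-(Complex.I * t * (σ * x : ℝ))) *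
        Complex.exp (σ ^ 2 * (Complex.I * t) ^ 2 / 2 +
          σ ^ 2 * (Complex.I * t) ^ 3 * q (Complex.I * t))) (Set.uIcc (-δ) δ) := fun t ht => by
    have htδ : |t| ≤ δ := abs_le.2 (by rwa [Set.uIcc_of_le (by linarith)] at ht)
    have hball : Complex.I * (t : ℂ) ∈ Metric.ball (0 : ℂ) ρ := by simpa using htδ.trans_lt hδρ
    simp only [exp_mul_integral_exp_eq μ T a, hT _ hball, hx]
  rw [hsum]
  refine (norm_sub_re_le (conj_intervalIntegral_exp_mul_charFun μ T δ k)).trans ?_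
  rw [intervalIntegral.integral_congr hchar]
  exact norm_intervalIntegral_sub_integral_edgeSum_le hρ hA hA1 hq r hδ hδρ hδA hσ x

end CharFun

lemma edgeworth_of_mgf_expansion {μ : Measure Ω} {T : ℕ → Ω → ℝ} {a σ : ℕ → ℝ} {ρ A : ℝ}
    {q : ℕ → ℂ → ℂ} (hρ : 0 < ρ) (hA : 2 / ρ ≤ A) (hA1 : 1 ≤ A)
    (hq : ∀ N, IsBoundedHolomorphic ρ A (q N))
    (hT : ∀ N, ∀ z ∈ Metric.ball (0 : ℂ) ρ, ∫ ω, Complex.exp (z * ((T N ω - a N : ℝ) : ℂ)) ∂μ =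
      Complex.exp (σ N ^ 2 * z ^ 2 / 2 + σ N ^ 2 * z ^ 3 * q N z))
    (hσ : Tendsto σ atTop atTop) (r : ℕ) {δ : ℝ} (hδ : 0 < δ) (hδρ : δ < ρ)
    (hδA : δ ≤ 1 / (4 * A)) {ε : ℝ} (hε : 0 < ε) :
    ∃ N₀, ∀ N ≥ N₀, ∀ k : ℝ,
      ‖(∫ t in (-δ)..δ, Complex.exp (-(Complex.I * (t : ℂ) * (k : ℂ))) *
            ∫ ω, Complex.exp (Complex.I * (t : ℂ) * (T N ω : ℂ)) ∂μ) -
          ((∑ b ∈ Icc 1 r, (σ N)⁻¹ ^ b * (edgePoly (q N) (b - 1)).eval ((k - a N) / σ N) *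
            gaussDensity ((k - a N) / σ N) : ℝ) : ℂ)‖ ≤ ε * (σ N)⁻¹ ^ r := by
  set M : ℝ := edgeErrorConst A δ r *
    ∫ u : ℝ, (1 + |u|) ^ (5 * r) * Real.exp (-(1 / 4) * u ^ 2)
  obtain ⟨N₀, hN₀⟩ := eventually_atTop.1 (hσ.eventually_ge_atTop (max 1 (M / ε)))
  refine ⟨N₀, fun N hN k => ?_⟩
  obtain ⟨hσ1, hσM⟩ := max_le_iff.1 (hN₀ N hN)
  have hσ0 : 0 < σ N := by linarith
  have hMε : M * (σ N)⁻¹ ≤ ε := by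
    rwa [← div_eq_mul_inv, div_le_iff₀ hσ0, mul_comm, ← div_le_iff₀ hε]
  calc _ ≤ M * (σ N)⁻¹ ^ (r + 1) := norm_intervalIntegral_charFun_sub_edgeworth_le hρ hA hA1
        (hq N) hσ1 (hT N) r hδ hδρ hδA k
    _ = M * (σ N)⁻¹ * (σ N)⁻¹ ^ r := by rw [pow_succ']; ring
    _ ≤ ε * (σ N)⁻¹ ^ r := by gcongr

/-! ### Bounded observables -/

/-- Bounded complex functions measurable with respect to `m`: the class of observables of the
chain. The σ-algebra is explicit because functions of the past and of all time coexist. -/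
structure BddMeasurable {α : Type*} (m : MeasurableSpace α) (u : α → ℂ) : Prop where
  measurable : Measurable[m] u
  exists_norm_le : ∃ M, ∀ x, ‖u x‖ ≤ M

namespace BddMeasurable

variable {α β : Type*} {m : MeasurableSpace α} {u v : α → ℂ}

lemma const (c : ℂ) : BddMeasurable m (fun _ => c) :=
  ⟨measurable_const, ‖c‖, fun _ => le_rfl⟩

lemma add (hu : BddMeasurable m u) (hv : BddMeasurable m v) :
    BddMeasurable m (fun x => u x + v x) := by
  obtain ⟨M, hM⟩ := hu.exists_norm_le
  obtain ⟨M', hM'⟩ := hv.exists_norm_le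
  exact ⟨hu.measurable.add hv.measurable, M + M', fun x => norm_add_le_of_le (hM x) (hM' x)⟩

lemma mul (hu : BddMeasurable m u) (hv : BddMeasurable m v) :
    BddMeasurable m (fun x => u x * v x) := by
  obtain ⟨M, hM⟩ := hu.exists_norm_le
  obtain ⟨M', hM'⟩ := hv.exists_norm_le
  exact ⟨hu.measurable.mul hv.measurable, M * M', fun x => norm_mul_le_of_le (hM x) (hM' x)⟩

lemma sub (hu : BddMeasurable m u) (hv : BddMeasurable m v) :
    BddMeasurable m (fun x => u x - v x) := by
  simpa [sub_eq_add_neg] using hu.add ((const (-1)).mul hv)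

lemma conj (hu : BddMeasurable m u) : BddMeasurable m (fun x => starRingEnd ℂ (u x)) :=
  ⟨Complex.continuous_conj.measurable.comp hu.measurable,
    hu.exists_norm_le.imp fun M hM x => by simpa using hM x⟩

lemma cexp (hu : BddMeasurable m u) : BddMeasurable m (fun x => Complex.exp (u x)) := by
  obtain ⟨M, hM⟩ := hu.exists_norm_le
  refine ⟨hu.measurable.cexp, Real.exp M, fun x => ?_⟩
  rw [Complex.norm_exp]
  exact Real.exp_le_exp.2 ((Complex.re_le_norm _).trans (hM x))

lemma normSq (hu : BddMeasurable m u) : BddMeasurable m (fun x => ((‖u x‖ ^ 2 : ℝ) : ℂ)) := by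
  simpa [Complex.conj_mul'] using hu.conj.mul hu

lemma sum {ι : Type*} (s : Finset ι) {w : ι → α → ℂ} (hw : ∀ i ∈ s, BddMeasurable m (w i)) :
    BddMeasurable m (fun x => ∑ i ∈ s, w i x) := by
  classical
  induction s using Finset.induction_on with
  | empty => simpa using const 0
  | insert i s his ih =>
    simp only [Finset.sum_insert his]
    exact (hw i (by simp)).add (ih fun j hj => hw j (by simp [hj]))

lemma mono {m' : MeasurableSpace α} (hmm : m ≤ m') (hu : BddMeasurable m u) :
    BddMeasurable m' u :=
  ⟨hu.measurable.mono hmm le_rfl, hu.exists_norm_le⟩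

lemma comp {m' : MeasurableSpace β} (hu : BddMeasurable m u) {X : β → α}
    (hX : Measurable[m', m] X) : BddMeasurable m' (fun y => u (X y)) :=
  ⟨hu.measurable.comp hX, hu.exists_norm_le.imp fun _ h y => h (X y)⟩

lemma integrable (hu : BddMeasurable m u) (μ : Measure α) [IsFiniteMeasure μ] :
    Integrable u μ := by
  obtain ⟨M, hM⟩ := hu.exists_norm_le
  exact .of_bound hu.measurable.aestronglyMeasurable M (.of_forall hM)

lemma integrable_normSq (hu : BddMeasurable m u) (μ : Measure α) [IsFiniteMeasure μ] :
    Integrable (fun x => ‖u x‖ ^ 2) μ := by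
  simpa only [RCLike.re_eq_complex_re, Complex.ofReal_re] using (hu.normSq.integrable μ).re

lemma kernel {m' : MeasurableSpace β} (hu : BddMeasurable m u) (κ : Kernel β α)
    [IsMarkovKernel κ] : BddMeasurable m' (fun x => ∫ y, u y ∂κ x) := by
  obtain ⟨M, hM⟩ := hu.exists_norm_le
  refine ⟨hu.measurable.stronglyMeasurable.integral_kernel.measurable, M, fun x => ?_⟩
  simpa using norm_integral_le_of_norm_le_const (μ := κ x) (.of_forall hM)

lemma integral_normSq_add (hu : BddMeasurable m u) (hv : BddMeasurable m v) (ν : Measure α)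
    [IsFiniteMeasure ν] :
    ∫ x, ‖u x + v x‖ ^ 2 ∂ν =
      ∫ x, ‖u x‖ ^ 2 ∂ν + 2 * (∫ x, starRingEnd ℂ (u x) * v x ∂ν).re + ∫ x, ‖v x‖ ^ 2 ∂ν := by
  have hexpand : ∀ x, ‖u x + v x‖ ^ 2 =
      ‖u x‖ ^ 2 + 2 * (starRingEnd ℂ (u x) * v x).re + ‖v x‖ ^ 2 := fun x => by
    rw [Complex.sq_norm, Complex.sq_norm, Complex.sq_norm, Complex.normSq_add]
    simp only [Complex.mul_re, Complex.conj_re, Complex.conj_im]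
    ring
  have hcross : Integrable (fun x => 2 * (starRingEnd ℂ (u x) * v x).re) ν :=
    ((hu.conj.mul hv).integrable ν).re.const_mul 2
  have hre : ∫ x, (starRingEnd ℂ (u x) * v x).re ∂ν = (∫ x, starRingEnd ℂ (u x) * v x ∂ν).re :=
    integral_re ((hu.conj.mul hv).integrable ν)
  simp_rw [hexpand]
  rw [integral_add ((hu.integrable_normSq ν).fun_add hcross) (hv.integrable_normSq ν),
    integral_add (hu.integrable_normSq ν) hcross, integral_const_mul, hre]

lemma integral_normSq_le_two_mul_add (hu : BddMeasurable m u) (hv : BddMeasurable m v)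
    (ν : Measure α) [IsFiniteMeasure ν] :
    ∫ x, ‖u x‖ ^ 2 ∂ν ≤ 2 * ∫ x, ‖u x + v x‖ ^ 2 ∂ν + 2 * ∫ x, ‖v x‖ ^ 2 ∂ν := by
  have hadd := ((hu.add hv).integrable_normSq ν).const_mul 2
  have hv' := (hv.integrable_normSq ν).const_mul 2
  rw [← integral_const_mul, ← integral_const_mul, ← integral_add hadd hv']
  refine integral_mono (hu.integrable_normSq ν) (hadd.add hv') fun x => ?_
  have htri : ‖u x‖ ≤ ‖u x + v x‖ + ‖v x‖ := by
    simpa using norm_sub_le (u x + v x) (v x)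
  have hsq := pow_le_pow_left₀ (norm_nonneg _) htri 2
  simp only
  linarith [add_sq_le (a := ‖u x + v x‖) (b := ‖v x‖)]

lemma integral_normSq_sub_const (hu : BddMeasurable m u) (ν : Measure α)
    [IsProbabilityMeasure ν] (c : ℂ) :
    ∫ x, ‖u x - c‖ ^ 2 ∂ν =
      ∫ x, ‖u x‖ ^ 2 ∂ν - 2 * (starRingEnd ℂ c * ∫ x, u x ∂ν).re + ‖c‖ ^ 2 := by
  have hadd := hu.integral_normSq_add (.const (-c)) ν
  rw [integral_mul_const, integral_conj] at hadd
  simp only [← sub_eq_add_neg, norm_neg, integral_const, probReal_univ, one_smul] at hadd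
  rw [hadd]
  simp only [Complex.mul_re, Complex.neg_re, Complex.neg_im, Complex.conj_re, Complex.conj_im]
  ring

lemma integral_normSq_sub_integral_le (hu : BddMeasurable m u) (ν : Measure α)
    [IsProbabilityMeasure ν] (c : ℂ) :
    ∫ x, ‖u x - ∫ y, u y ∂ν‖ ^ 2 ∂ν ≤ ∫ x, ‖u x - c‖ ^ 2 ∂ν := by
  rw [hu.integral_normSq_sub_const, hu.integral_normSq_sub_const, Complex.sq_norm, Complex.sq_norm,
    Complex.normSq_apply, Complex.normSq_apply]
  simp only [Complex.mul_re, Complex.conj_re, Complex.conj_im]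
  nlinarith [sq_nonneg ((∫ y, u y ∂ν).re - c.re), sq_nonneg ((∫ y, u y ∂ν).im - c.im)]

lemma hasDerivAt_integral_mul_cexp (hu : BddMeasurable m u) (hv : BddMeasurable m v)
    (ν : Measure α) [IsFiniteMeasure ν] (z : ℂ) :
    HasDerivAt (fun z : ℂ => ∫ x, u x * Complex.exp (z * v x) ∂ν)
      (∫ x, u x * v x * Complex.exp (z * v x) ∂ν) z := by
  obtain ⟨M, hM⟩ := (hu.mul hv).exists_norm_le
  obtain ⟨M', hM'⟩ := hv.exists_norm_le
  have hexp (w : ℂ) : BddMeasurable m (fun x => Complex.exp (w * v x)) := ((const w).mul hv).cexp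
  have hbound (w : ℂ) (hw : w ∈ Metric.ball z 1) (x : α) :
      ‖u x * v x * Complex.exp (w * v x)‖ ≤ M * Real.exp ((‖z‖ + 1) * M') := by
    have hw' : ‖w‖ ≤ ‖z‖ + 1 := by
      linarith [norm_le_norm_add_norm_sub z w, mem_ball_iff_norm'.1 hw]
    refine norm_mul_le_of_le (hM x) ?_
    rw [Complex.norm_exp]
    exact Real.exp_le_exp.2 ((Complex.re_le_norm _).trans (norm_mul_le_of_le hw' (hM' x)))
  have hderiv (w : ℂ) (x : α) : HasDerivAt (fun w => u x * Complex.exp (w * v x))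
      (u x * v x * Complex.exp (w * v x)) w := by
    convert! (((hasDerivAt_id w).mul_const (v x)).cexp.const_mul (u x)) using 1
    simp only [id]
    ring
  exact (hasDerivAt_integral_of_dominated_loc_of_deriv_le (Metric.ball_mem_nhds z one_pos)
    (.of_forall fun w => (hu.mul (hexp w)).measurable.aestronglyMeasurable)
    ((hu.mul (hexp z)).integrable ν) ((hu.mul hv).mul (hexp z)).measurable.aestronglyMeasurable
    (.of_forall fun x w hw => hbound w hw x) (integrable_const _)
    (.of_forall fun x w _ => hderiv w x)).2

end BddMeasurable

/-! ### Doeblin chains -/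

lemma integral_bind_kernel {α β F : Type*} [MeasurableSpace α] [MeasurableSpace β]
    [NormedAddCommGroup F] [NormedSpace ℝ F] (ν : Measure α) [SFinite ν] (η : Kernel α β)
    [IsSFiniteKernel η] {u : β → F} (hu : Integrable u (ν.bind η)) :
    ∫ y, u y ∂(ν.bind η) = ∫ x, ∫ y, u y ∂η x ∂ν := by
  have h := Kernel.integral_comp (κ := Kernel.const Unit ν) (η := η) (a := ()) (f := u)
  rw [Kernel.comp_apply, Kernel.const_apply] at h
  exact h hu

/-- The σ-algebra generated by `X 0, …, X n`. -/
abbrev past {Ω' : Type*} (X : ℕ → Ω' → E) (n : ℕ) : MeasurableSpace Ω' :=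
  ⨆ i : Fin (n + 1), MeasurableSpace.comap (X i) (inferInstance : MeasurableSpace E)

/-- `X` is a Markov chain under `μ` with transition kernel `κ n` from time `n` to `n + 1`. -/
structure IsMarkovChain (μ : Measure Ω) (X : ℕ → Ω → E) (κ : ℕ → Kernel E E) : Prop where
  measurable (n : ℕ) : Measurable (X n)
  condExp_indicator (n : ℕ) (A : Set E) (hA : MeasurableSet A) :
    μ[fun ω => A.indicator (fun _ => (1 : ℝ)) (X (n + 1) ω) | past X n] =ᵐ[μ]
      fun ω => (κ n (X n ω) A).toReal

/-- A Markov chain whose transition probabilities dominate `c` times the law of the next state.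
This one-sided bound is the part of uniform ellipticity that produces a spectral gap. -/
structure IsDoeblinChain (μ : Measure Ω) (X : ℕ → Ω → E) (κ : ℕ → Kernel E E) (c : ℝ) : Prop
    extends IsMarkovChain μ X κ where
  pos : 0 < c
  minorization (n : ℕ) (A : Set E) (hA : MeasurableSet A) :
    ∀ᵐ ω ∂μ, ENNReal.ofReal c * μ.map (X (n + 1)) A ≤ κ n (X n ω) A

lemma UEChain.isDoeblinChain {μ : Measure Ω} {X : ℕ → Ω → E} {κ : ℕ → Kernel E E} {C : ℝ}
    (h : UEChain μ X κ C) (hC : 0 < C) : IsDoeblinChain μ X κ C⁻¹ where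
  measurable := h.2.1
  condExp_indicator := h.2.2.2.1
  pos := inv_pos.2 hC
  minorization n A hA := by
    filter_upwards [h.2.2.2.2 n A hA] with ω hω
    rw [ENNReal.ofReal_inv_of_pos hC, mul_comm, ← div_eq_mul_inv]
    exact ENNReal.div_le_of_le_mul' hω.2

lemma measurable_past {Ω' : Type*} (X : ℕ → Ω' → E) {i n : ℕ} (hin : i ≤ n) :
    Measurable[past X n] (X i) :=
  Measurable.of_comap_le <| le_iSup
    (fun j : Fin (n + 1) => MeasurableSpace.comap (X j) (inferInstance : MeasurableSpace E))
    ⟨i, Nat.lt_succ_of_le hin⟩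

lemma past_mono {Ω' : Type*} (X : ℕ → Ω' → E) (n : ℕ) : past X n ≤ past X (n + 1) :=
  iSup_le fun i => (measurable_past X (by omega : (i : ℕ) ≤ n + 1)).comap_le

namespace IsMarkovChain

variable {μ : Measure Ω} {X : ℕ → Ω → E} {κ : ℕ → Kernel E E}

lemma past_le (h : IsMarkovChain μ X κ) (n : ℕ) :
    past X n ≤ (inferInstance : MeasurableSpace Ω) :=
  iSup_le fun i => (h.measurable i).comap_le

variable [IsProbabilityMeasure μ] [∀ n, IsMarkovKernel (κ n)]

lemma map_restrict_succ (h : IsMarkovChain μ X κ) (n : ℕ) {s : Set Ω}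
    (hs : MeasurableSet[past X n] s) :
    (μ.restrict s).map (X (n + 1)) = ((μ.restrict s).map (X n)).bind (κ n) := by
  ext A hA
  rw [Measure.map_apply (h.measurable _) hA, Measure.bind_apply hA (κ n).aemeasurable,
    lintegral_map ((κ n).measurable_coe hA) (h.measurable n)]
  have hfinite : ∫⁻ ω in s, κ n (X n ω) A ∂μ ≠ ⊤ :=
    ((lintegral_mono fun ω => prob_le_one).trans_lt (by simp)).ne
  rw [← ENNReal.toReal_eq_toReal_iff' (measure_ne_top _ _) hfinite]
  calc (μ.restrict s).real (X (n + 1) ⁻¹' A)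
      = ∫ ω in s, A.indicator (fun _ => (1 : ℝ)) (X (n + 1) ω) ∂μ :=
        (integral_indicator_one (h.measurable (n + 1) hA)).symm
    _ = ∫ ω in s, (μ[fun ω => A.indicator (fun _ => (1 : ℝ)) (X (n + 1) ω) | past X n]) ω ∂μ :=
        (setIntegral_condExp (h.past_le n)
          ((integrable_const (1 : ℝ)).indicator (h.measurable (n + 1) hA)) hs).symm
    _ = ∫ ω in s, (κ n (X n ω) A).toReal ∂μ :=
        setIntegral_congr_ae (h.past_le n s hs)
          ((h.condExp_indicator n A hA).mono fun ω hω _ => hω)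
    _ = (∫⁻ ω in s, κ n (X n ω) A ∂μ).toReal :=
        integral_toReal (((κ n).measurable_coe hA).comp (h.measurable n)).aemeasurable
          (.of_forall fun ω => measure_lt_top _ _)

lemma condExp_succ (h : IsMarkovChain μ X κ) (n : ℕ) {u : E → ℂ}
    (hu : BddMeasurable inferInstance u) :
    (fun ω => ∫ y, u y ∂κ n (X n ω)) =ᵐ[μ] μ[fun ω => u (X (n + 1) ω) | past X n] := by
  have hκu : BddMeasurable (past X n) (fun ω => ∫ y, u y ∂κ n (X n ω)) :=
    (hu.kernel (κ n)).comp (measurable_past X le_rfl)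
  refine ae_eq_condExp_of_forall_setIntegral_eq (h.past_le n)
    ((hu.comp (h.measurable _)).integrable μ)
    (fun s _ _ => ((hκu.mono (h.past_le n)).integrable μ).integrableOn) (fun s hs _ => ?_)
    hκu.measurable.stronglyMeasurable.aestronglyMeasurable
  rw [← integral_map (h.measurable n).aemeasurable
      (hu.kernel (κ n)).measurable.aestronglyMeasurable,
    ← integral_map (h.measurable (n + 1)).aemeasurable hu.measurable.aestronglyMeasurable,
    h.map_restrict_succ n hs, integral_bind_kernel _ _ (hu.integrable _)]

lemma integral_mul_succ (h : IsMarkovChain μ X κ) (n : ℕ) {Z : Ω → ℂ}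
    (hZ : BddMeasurable (past X n) Z) {u : E → ℂ} (hu : BddMeasurable inferInstance u) :
    ∫ ω, Z ω * u (X (n + 1) ω) ∂μ = ∫ ω, Z ω * ∫ y, u y ∂κ n (X n ω) ∂μ := by
  have huX := hu.comp (h.measurable (n + 1))
  have hpull := condExp_bilin_of_stronglyMeasurable_left (μ := μ) (ContinuousLinearMap.mul ℝ ℂ)
    hZ.measurable.stronglyMeasurable (((hZ.mono (h.past_le n)).mul huX).integrable μ)
    (huX.integrable μ)
  rw [← integral_condExp (h.past_le n)]
  refine integral_congr_ae (hpull.trans ?_)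
  filter_upwards [h.condExp_succ n hu] with ω hω
  simp [hω]

lemma integral_succ (h : IsMarkovChain μ X κ) (n : ℕ) {u : E → ℂ}
    (hu : BddMeasurable inferInstance u) :
    ∫ ω, ∫ y, u y ∂κ n (X n ω) ∂μ = ∫ ω, u (X (n + 1) ω) ∂μ := by
  simpa using (h.integral_mul_succ n (.const 1) hu).symm

lemma integral_normSq_succ (h : IsMarkovChain μ X κ) (n : ℕ) {g : E → ℂ}
    (hg : BddMeasurable inferInstance g) :
    ∫ ω, ∫ y, ‖g y‖ ^ 2 ∂κ n (X n ω) ∂μ = ∫ ω, ‖g (X (n + 1) ω)‖ ^ 2 ∂μ := by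
  have hsucc := h.integral_succ n hg.normSq
  simp_rw [integral_complex_ofReal] at hsucc
  exact_mod_cast hsucc

lemma integral_normSq_add_succ (h : IsMarkovChain μ X κ) (n : ℕ) {Z : Ω → ℂ}
    (hZ : BddMeasurable (past X n) Z) {g : E → ℂ} (hg : BddMeasurable inferInstance g) :
    ∫ ω, ‖Z ω + g (X (n + 1) ω)‖ ^ 2 ∂μ =
      ∫ ω, ‖Z ω + ∫ u, g u ∂κ n (X n ω)‖ ^ 2 ∂μ +
        (∫ ω, ‖g (X (n + 1) ω)‖ ^ 2 ∂μ - ∫ ω, ‖∫ u, g u ∂κ n (X n ω)‖ ^ 2 ∂μ) := by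
  have hZ' := hZ.mono (h.past_le n)
  rw [hZ'.integral_normSq_add (hg.comp (h.measurable (n + 1))),
    hZ'.integral_normSq_add ((hg.kernel (κ n)).comp (h.measurable n)),
    h.integral_mul_succ n hZ.conj hg]
  ring

end IsMarkovChain

lemma ae_forall_le_of_continuous {T : Type*} [TopologicalSpace T]
    [TopologicalSpace.SeparableSpace T] {μ : Measure Ω} {F G : Ω → T → ℝ}
    (hF : ∀ ω, Continuous (F ω)) (hG : ∀ ω, Continuous (G ω))
    (hFG : ∀ t, ∀ᵐ ω ∂μ, F ω t ≤ G ω t) : ∀ᵐ ω ∂μ, ∀ t, F ω t ≤ G ω t := by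
  obtain ⟨D, hD, hdense⟩ := TopologicalSpace.exists_countable_dense T
  filter_upwards [(ae_ball_iff hD).2 fun t _ => hFG t] with ω hω t
  exact (isClosed_le (hF ω) (hG ω)).closure_subset_iff.2 hω (hdense t)

namespace IsDoeblinChain

variable {μ : Measure Ω} {X : ℕ → Ω → E} {κ : ℕ → Kernel E E} {c : ℝ}

lemma ofReal_mul_lintegral_map_le (h : IsDoeblinChain μ X κ c) (n : ℕ) {u : E → ℝ≥0∞}
    (hu : Measurable u) :
    ∀ᵐ ω ∂μ, ENNReal.ofReal c * ∫⁻ y, u y ∂(μ.map (X (n + 1))) ≤ ∫⁻ y, u y ∂κ n (X n ω) := by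
  refine Measurable.ennreal_induction (motive := fun u => ∀ᵐ ω ∂μ,
    ENNReal.ofReal c * ∫⁻ y, u y ∂(μ.map (X (n + 1))) ≤ ∫⁻ y, u y ∂κ n (X n ω))
    (fun b s hs => ?_) (fun f g _ hf _ hf' hg' => ?_) (fun f hf hmono hf' => ?_) hu
  · filter_upwards [h.minorization n s hs] with ω hω
    rw [lintegral_indicator_const hs, lintegral_indicator_const hs, mul_left_comm]
    gcongr
  · filter_upwards [hf', hg'] with ω hfω hgω
    simp only [Pi.add_apply]
    rw [lintegral_add_left hf, lintegral_add_left hf, mul_add]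
    exact add_le_add hfω hgω
  · filter_upwards [ae_all_iff.2 hf'] with ω hω
    rw [lintegral_iSup hf hmono, lintegral_iSup hf hmono, ENNReal.mul_iSup]
    exact iSup_mono hω

variable [IsProbabilityMeasure μ] [∀ n, IsMarkovKernel (κ n)]

lemma le_one (h : IsDoeblinChain μ X κ c) : c ≤ 1 := by
  obtain ⟨ω, hω⟩ := (h.minorization 0 Set.univ .univ).exists
  rw [Measure.map_apply (h.measurable 1) .univ] at hω
  simpa using hω

lemma mul_integral_normSq_le (h : IsDoeblinChain μ X κ c) (n : ℕ) {g : E → ℂ}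
    (hg : BddMeasurable inferInstance g) :
    ∀ᵐ ω ∂μ, c * ∫ ω', ‖g (X (n + 1) ω')‖ ^ 2 ∂μ ≤ ∫ y, ‖g y‖ ^ 2 ∂κ n (X n ω) := by
  have : IsProbabilityMeasure (μ.map (X (n + 1))) :=
    Measure.isProbabilityMeasure_map (h.measurable _).aemeasurable
  have hm : Measurable (fun y => ‖g y‖ ^ 2) := hg.measurable.norm.pow_const 2
  filter_upwards [h.ofReal_mul_lintegral_map_le n hm.ennreal_ofReal] with ω hω
  rwa [← ofReal_integral_eq_lintegral_ofReal (hg.integrable_normSq _)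
      (.of_forall fun y => by positivity),
    ← ofReal_integral_eq_lintegral_ofReal (hg.integrable_normSq _)
      (.of_forall fun y => by positivity),
    ← ENNReal.ofReal_mul h.pos.le,
    ENNReal.ofReal_le_ofReal_iff (integral_nonneg fun y => by positivity),
    integral_map (h.measurable _).aemeasurable hm.aestronglyMeasurable] at hω

lemma normSq_kernel_le (h : IsDoeblinChain μ X κ c) (n : ℕ) {g : E → ℂ}
    (hg : BddMeasurable inferInstance g) (hmean : ∫ ω, g (X (n + 1) ω) ∂μ = 0) :
    ∀ᵐ ω ∂μ, ‖∫ y, g y ∂κ n (X n ω)‖ ^ 2 ≤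
      ∫ y, ‖g y‖ ^ 2 ∂κ n (X n ω) - c * ∫ ω', ‖g (X (n + 1) ω')‖ ^ 2 ∂μ := by
  set W := ∫ ω', ‖g (X (n + 1) ω')‖ ^ 2 ∂μ
  have hquad : ∀ᵐ ω ∂μ, ∀ a : ℂ, c * (W + ‖a‖ ^ 2) ≤ ∫ y, ‖g y‖ ^ 2 ∂κ n (X n ω) -
      2 * (starRingEnd ℂ a * ∫ y, g y ∂κ n (X n ω)).re + ‖a‖ ^ 2 := by
    refine ae_forall_le_of_continuous (fun _ => by fun_prop) (fun ω => by fun_prop) fun a => ?_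
    filter_upwards [h.mul_integral_normSq_le n (hg.sub (.const a))] with ω hω
    rw [(hg.comp (h.measurable (n + 1))).integral_normSq_sub_const, hmean,
      hg.integral_normSq_sub_const] at hω
    simpa using hω
  filter_upwards [hquad] with ω hω
  -- The variance of `g` under the kernel is the value of the quadratic form at its mean.
  have hmin := hω (∫ y, g y ∂κ n (X n ω))
  rw [Complex.conj_mul', ← Complex.ofReal_pow, Complex.ofReal_re] at hmin
  nlinarith [mul_nonneg h.pos.le (sq_nonneg ‖∫ y, g y ∂κ n (X n ω)‖)]

lemma spectral_gap (h : IsDoeblinChain μ X κ c) (n : ℕ) {g : E → ℂ}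
    (hg : BddMeasurable inferInstance g) (hmean : ∫ ω, g (X (n + 1) ω) ∂μ = 0) :
    ∫ ω, ‖∫ y, g y ∂κ n (X n ω)‖ ^ 2 ∂μ ≤ (1 - c) * ∫ ω, ‖g (X (n + 1) ω)‖ ^ 2 ∂μ := by
  have hκg : BddMeasurable inferInstance (fun ω => ∫ y, g y ∂κ n (X n ω)) :=
    (hg.kernel (κ n)).comp (h.measurable n)
  have hint : Integrable (fun ω => ∫ y, ‖g y‖ ^ 2 ∂κ n (X n ω)) μ := by
    have hκnormSq := ((hg.normSq.kernel (κ n)).comp (h.measurable n)).integrable μ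
    simp_rw [integral_complex_ofReal] at hκnormSq
    simpa only [RCLike.re_eq_complex_re, Complex.ofReal_re] using hκnormSq.re
  calc ∫ ω, ‖∫ y, g y ∂κ n (X n ω)‖ ^ 2 ∂μ
      ≤ ∫ ω, (∫ y, ‖g y‖ ^ 2 ∂κ n (X n ω) - c * ∫ ω', ‖g (X (n + 1) ω')‖ ^ 2 ∂μ) ∂μ :=
        integral_mono_ae (hκg.integrable_normSq μ) (hint.sub (integrable_const _))
          (h.normSq_kernel_le n hg hmean)
    _ = (1 - c) * ∫ ω, ‖g (X (n + 1) ω)‖ ^ 2 ∂μ := by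
        rw [integral_sub hint (integrable_const _), h.integral_normSq_succ n hg]
        simp only [integral_const, probReal_univ, one_smul]
        ring

end IsDoeblinChain

/-! ### Variance of sums along a Doeblin chain -/

/-- The sum `a (n + 1) + ⋯ + a (n + k)` of the `k` terms following index `n`. -/
def tailSum {M : Type*} [AddCommMonoid M] (a : ℕ → M) (n k : ℕ) : M :=
  ∑ i ∈ range k, a (n + 1 + i)

section TailSum

variable {M : Type*} [AddCommMonoid M] (a : ℕ → M)

@[simp]
lemma tailSum_zero (n : ℕ) : tailSum a n 0 = 0 := rfl

lemma tailSum_succ (n k : ℕ) : tailSum a n (k + 1) = a (n + 1) + tailSum a (n + 1) k := by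
  rw [tailSum, sum_range_succ', add_comm]
  simp only [tailSum, add_zero, add_assoc, add_comm 1]

lemma tailSum_zero_eq_sum_Icc (k : ℕ) : tailSum a 0 k = ∑ i ∈ Icc 1 k, a i := by
  rw [← Ico_add_one_right_eq_Icc, sum_Ico_eq_sum_range]
  simp [tailSum]

end TailSum

lemma tailSum_nonneg {a : ℕ → ℝ} (ha : ∀ i, 0 ≤ a i) (n k : ℕ) : 0 ≤ tailSum a n k :=
  sum_nonneg fun _ _ => ha _

/-- The second moment of `y n (X n)`. -/
def secondMoment {F : Type*} (μ : Measure Ω) (X : ℕ → Ω → F) (y : ℕ → F → ℂ) (n : ℕ) : ℝ :=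
  ∫ ω, ‖y n (X n ω)‖ ^ 2 ∂μ

lemma secondMoment_nonneg {F : Type*} (μ : Measure Ω) (X : ℕ → Ω → F) (y : ℕ → F → ℂ)
    (n : ℕ) : 0 ≤ secondMoment μ X y n :=
  integral_nonneg fun _ => by positivity

/-- The conditional expectation of `y (n + 1) (X (n + 1)) + ⋯ + y (n + k) (X (n + k))` given
`X n = x`, for a Markov chain `X` with kernels `κ`. -/
def condTail (κ : ℕ → Kernel E E) (y : ℕ → E → ℂ) : ℕ → ℕ → E → ℂ
  | _, 0 => fun _ => 0
  | n, k + 1 => fun x => ∫ u, (y (n + 1) u + condTail κ y (n + 1) k u) ∂κ n x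

section Variance

variable {μ : Measure Ω} {X : ℕ → Ω → E} {κ : ℕ → Kernel E E} {c : ℝ} {y : ℕ → E → ℂ}

lemma bddMeasurable_tailSum (hX : ∀ n, Measurable (X n))
    (hy : ∀ n, BddMeasurable inferInstance (y n)) (n k : ℕ) :
    BddMeasurable inferInstance (fun ω => tailSum (fun m => y m (X m ω)) n k) :=
  .sum _ fun _ _ => (hy _).comp (hX _)

variable [∀ n, IsMarkovKernel (κ n)]

lemma bddMeasurable_condTail (hy : ∀ n, BddMeasurable inferInstance (y n)) (n k : ℕ) :
    BddMeasurable inferInstance (condTail κ y n k) := by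
  induction k generalizing n with
  | zero => exact .const 0
  | succ k ih => exact ((hy (n + 1)).add (ih (n + 1))).kernel (κ n)

variable [IsProbabilityMeasure μ]

lemma IsMarkovChain.integral_condTail (h : IsMarkovChain μ X κ)
    (hy : ∀ n, BddMeasurable inferInstance (y n)) (hmean : ∀ n, ∫ ω, y n (X n ω) ∂μ = 0)
    (n k : ℕ) : ∫ ω, condTail κ y n k (X n ω) ∂μ = 0 := by
  induction k generalizing n with
  | zero => simp [condTail]
  | succ k ih =>
    have hT := bddMeasurable_condTail (κ := κ) hy (n + 1) k
    simp only [condTail]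
    rw [h.integral_succ n ((hy (n + 1)).add hT),
      integral_add (((hy _).comp (h.measurable _)).integrable μ)
        ((hT.comp (h.measurable _)).integrable μ), hmean, ih, add_zero]

-- The spectral gap lets a fixed share of the variance of each step survive conditioning on the
-- past; the summand with `condTail` is the slack that makes the induction close.
lemma IsDoeblinChain.le_integral_normSq_add_tailSum (h : IsDoeblinChain μ X κ c)
    (hy : ∀ n, BddMeasurable inferInstance (y n)) (hmean : ∀ n, ∫ ω, y n (X n ω) ∂μ = 0)
    (n k : ℕ) {Z : Ω → ℂ} (hZ : BddMeasurable (past X n) Z) :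
    ∫ ω, ‖Z ω + condTail κ y n k (X n ω)‖ ^ 2 ∂μ +
        c / 4 * (tailSum (secondMoment μ X y) n k +
          2 * ∫ ω, ‖condTail κ y n k (X n ω)‖ ^ 2 ∂μ) ≤
      ∫ ω, ‖Z ω + tailSum (fun m => y m (X m ω)) n k‖ ^ 2 ∂μ := by
  induction k generalizing n Z with
  | zero => simp [condTail]
  | succ k ih =>
    have hT := bddMeasurable_condTail (κ := κ) hy (n + 1) k
    have hyX := (hy (n + 1)).comp (h.measurable (n + 1))
    have hTX := hT.comp (h.measurable (n + 1))
    have htail := ih (n + 1) ((hZ.mono (past_mono X n)).add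
      ((hy (n + 1)).comp (measurable_past X le_rfl)))
    have hsplit := h.integral_normSq_add_succ n hZ ((hy (n + 1)).add hT)
    have hgap := h.spectral_gap n ((hy (n + 1)).add hT) (by
      rw [integral_add (hyX.integrable μ) (hTX.integrable μ), hmean,
        h.integral_condTail hy hmean, add_zero])
    have hterm := hyX.integral_normSq_le_two_mul_add hTX μ
    simp only [condTail, tailSum_succ, secondMoment, ← add_assoc] at htail hsplit ⊢
    set A := ∫ ω, ‖y (n + 1) (X (n + 1) ω) + condTail κ y (n + 1) k (X (n + 1) ω)‖ ^ 2 ∂μ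
    have hcA : 0 ≤ c * A := mul_nonneg h.pos.le (integral_nonneg fun ω => by positivity)
    linarith [mul_le_mul_of_nonneg_left hterm h.pos.le,
      mul_le_mul_of_nonneg_left hgap h.pos.le, mul_nonneg h.pos.le hcA]

lemma IsDoeblinChain.tailSum_secondMoment_le (h : IsDoeblinChain μ X κ c)
    (hy : ∀ n, BddMeasurable inferInstance (y n)) (hmean : ∀ n, ∫ ω, y n (X n ω) ∂μ = 0)
    (n k : ℕ) :
    tailSum (secondMoment μ X y) n k ≤
      4 / c * ∫ ω, ‖tailSum (fun m => y m (X m ω)) n k‖ ^ 2 ∂μ := by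
  have hsum := h.le_integral_normSq_add_tailSum hy hmean n k (.const 0)
  simp only [zero_add] at hsum
  have hcond : 0 ≤ ∫ ω, ‖condTail κ y n k (X n ω)‖ ^ 2 ∂μ :=
    integral_nonneg fun ω => by positivity
  have hc := h.pos
  rw [div_mul_eq_mul_div, le_div_iff₀ hc]
  nlinarith

end Variance

/-! ### Relative variance under exponential tilting -/

/-- The relative variance (squared coefficient of variation) of a complex random variable, read
as `0` when its mean vanishes. -/
def relVar {α : Type*} {_ : MeasurableSpace α} (ν : Measure α) (v : α → ℂ) : ℝ :=
  (∫ x, ‖v x - ∫ x', v x' ∂ν‖ ^ 2 ∂ν) / ‖∫ x, v x ∂ν‖ ^ 2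

lemma relVar_nonneg {α : Type*} {m : MeasurableSpace α} (ν : Measure α) (v : α → ℂ) :
    0 ≤ relVar ν v :=
  div_nonneg (integral_nonneg fun _ => by positivity) (by positivity)

lemma relVar_const {α : Type*} {m : MeasurableSpace α} (ν : Measure α) [IsProbabilityMeasure ν]
    (c : ℂ) : relVar ν (fun _ => c) = 0 := by
  simp [relVar]

lemma norm_cexp_sub_one_mul_add_le {u : ℂ} (hu : ‖u‖ ≤ 1) (d m : ℂ) :
    ‖(Complex.exp u - 1) * d + m * (Complex.exp u - 1 - u)‖ * ‖m‖ ≤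
      2 * ‖m‖ ^ 2 * ‖u‖ ^ 2 + ‖d‖ ^ 2 := by
  have hnorm : ‖(Complex.exp u - 1) * d + m * (Complex.exp u - 1 - u)‖ ≤
      2 * ‖u‖ * ‖d‖ + ‖m‖ * ‖u‖ ^ 2 := by
    refine norm_add_le_of_le ?_ ?_ <;> rw [norm_mul] <;> gcongr
    exacts [Complex.norm_exp_sub_one_le hu, Complex.norm_exp_sub_one_sub_id_le hu]
  refine (mul_le_mul_of_nonneg_right hnorm (norm_nonneg _)).trans ?_
  linarith [sq_nonneg (‖m‖ * ‖u‖ - ‖d‖)]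

lemma add_sq_le_of_pos {e : ℝ} (he : 0 < e) (a b : ℝ) :
    (a + b) ^ 2 ≤ (1 + e) * a ^ 2 + (1 + e⁻¹) * b ^ 2 := by
  have hsq : 0 ≤ e⁻¹ * (e * a - b) ^ 2 := by positivity
  have hexpand : e⁻¹ * (e * a - b) ^ 2 = e * a ^ 2 - 2 * (a * b) + e⁻¹ * b ^ 2 := by
    field_simp
    ring
  linarith

lemma normSq_cexp_mul_sub_le {e : ℝ} (he : 0 < e) (he1 : e ≤ 1) {u : ℂ} (hu : 2 * ‖u‖ ≤ e)
    (v m : ℂ) :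
    ‖Complex.exp u * v - m‖ ^ 2 ≤
      (1 + e) ^ 3 * ‖v - m‖ ^ 2 + 4 * (1 + e⁻¹) * ‖m‖ ^ 2 * ‖u‖ ^ 2 := by
  have hsub : ‖Complex.exp u - 1‖ ≤ 2 * ‖u‖ := Complex.norm_exp_sub_one_le (by linarith)
  have hexp : ‖Complex.exp u‖ ≤ 1 + e := by
    have := norm_le_norm_add_norm_sub' (Complex.exp u) 1
    rw [norm_one] at this
    linarith
  have hnorm : ‖Complex.exp u * v - m‖ ≤ (1 + e) * ‖v - m‖ + 2 * ‖u‖ * ‖m‖ := by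
    rw [show Complex.exp u * v - m = Complex.exp u * (v - m) + (Complex.exp u - 1) * m by ring]
    refine norm_add_le_of_le ?_ ?_ <;> rw [norm_mul] <;> gcongr
  calc ‖Complex.exp u * v - m‖ ^ 2
      ≤ ((1 + e) * ‖v - m‖ + 2 * ‖u‖ * ‖m‖) ^ 2 := by gcongr
    _ ≤ (1 + e) * ((1 + e) * ‖v - m‖) ^ 2 + (1 + e⁻¹) * (2 * ‖u‖ * ‖m‖) ^ 2 :=
        add_sq_le_of_pos he _ _
    _ = _ := by ring

lemma tilted_relVar_le {e R w s : ℝ} (he : 0 < e) (he1 : e ≤ 1 / 16) (hR : 0 ≤ R) (hw : 0 ≤ w)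
    (hs : 1 - 2 * e ≤ s) :
    (1 - 16 * e) * ((1 + e) ^ 3 * R + 4 * (1 + e⁻¹) * w) ≤ ((1 - e) * R + 7 / e * w) * s ^ 2 := by
  have hcoeffR : (1 - 16 * e) * (1 + e) ^ 3 ≤ (1 - e) * (1 - 2 * e) ^ 2 := by
    nlinarith [pow_pos he 2, pow_pos he 3, pow_pos he 4]
  have hcoeffw : (1 - 16 * e) * (4 * (1 + e⁻¹)) ≤ 7 / e * (1 - 2 * e) ^ 2 := by
    rw [div_mul_eq_mul_div, le_div_iff₀ he]
    field_simp
    nlinarith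
  have hb : 0 ≤ (1 - e) * R + 7 / e * w :=
    add_nonneg (mul_nonneg (by linarith) hR) (by positivity)
  calc (1 - 16 * e) * ((1 + e) ^ 3 * R + 4 * (1 + e⁻¹) * w)
      = (1 - 16 * e) * (1 + e) ^ 3 * R + (1 - 16 * e) * (4 * (1 + e⁻¹)) * w := by ring
    _ ≤ (1 - e) * (1 - 2 * e) ^ 2 * R + 7 / e * (1 - 2 * e) ^ 2 * w := by gcongr
    _ = ((1 - e) * R + 7 / e * w) * (1 - 2 * e) ^ 2 := by ring
    _ ≤ ((1 - e) * R + 7 / e * w) * s ^ 2 := by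
        gcongr
        linarith

namespace BddMeasurable

variable {α : Type*} {m : MeasurableSpace α} {u v : α → ℂ} {ν : Measure α}
  [IsProbabilityMeasure ν] {e : ℝ}

lemma norm_integral_cexp_mul_div_sub_one_le (hu : BddMeasurable m u) (hv : BddMeasurable m v)
    (hu0 : ∫ x, u x ∂ν = 0) (hu1 : ∀ x, ‖u x‖ ≤ 1) (hv0 : ∫ x, v x ∂ν ≠ 0) :
    ‖(∫ x, Complex.exp (u x) * v x ∂ν) / (∫ x, v x ∂ν) - 1‖ ≤
      2 * ∫ x, ‖u x‖ ^ 2 ∂ν + relVar ν v := by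
  rw [relVar]
  set a := ∫ x, v x ∂ν
  have hincr := ((hu.cexp.sub (.const 1)).mul (hv.sub (.const a))).add
    ((const a).mul ((hu.cexp.sub (.const 1)).sub hu))
  have hdiff : (∫ x, Complex.exp (u x) * v x ∂ν) - a =
      ∫ x, ((Complex.exp (u x) - 1) * (v x - a) + a * (Complex.exp (u x) - 1 - u x)) ∂ν := by
    have hexpand (x : α) : (Complex.exp (u x) - 1) * (v x - a) +
        a * (Complex.exp (u x) - 1 - u x) = Complex.exp (u x) * v x - v x - a * u x := by ring
    simp_rw [hexpand]
    rw [integral_sub (((hu.cexp.mul hv).sub hv).integrable ν) (((const a).mul hu).integrable ν),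
      integral_sub ((hu.cexp.mul hv).integrable ν) (hv.integrable ν), integral_const_mul, hu0,
      mul_zero, sub_zero]
  have husq := (hu.integrable_normSq ν).const_mul (2 * ‖a‖ ^ 2)
  have hvsq := (hv.sub (.const a)).integrable_normSq ν
  have hmul : ‖(∫ x, Complex.exp (u x) * v x ∂ν) - a‖ * ‖a‖ ≤
      2 * ‖a‖ ^ 2 * ∫ x, ‖u x‖ ^ 2 ∂ν + ∫ x, ‖v x - a‖ ^ 2 ∂ν := by
    rw [hdiff, ← integral_const_mul, ← integral_add husq hvsq]
    refine (mul_le_mul_of_nonneg_right (norm_integral_le_integral_norm _) (norm_nonneg _)).trans ?_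
    rw [← integral_mul_const]
    exact integral_mono ((hincr.integrable ν).norm.mul_const _) (husq.add hvsq)
      fun x => norm_cexp_sub_one_mul_add_le (hu1 x) _ _
  have ha0 : 0 < ‖a‖ := norm_pos_iff.2 hv0
  rw [div_sub_one hv0, norm_div, div_le_iff₀ ha0]
  refine le_of_mul_le_mul_right (hmul.trans_eq ?_) ha0
  field_simp

lemma integral_normSq_cexp_mul_sub_le (hu : BddMeasurable m u) (hv : BddMeasurable m v)
    (he : 0 < e) (he1 : e ≤ 1) (hue : ∀ x, 2 * ‖u x‖ ≤ e) (hv0 : ∫ x, v x ∂ν ≠ 0) :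
    ∫ x, ‖Complex.exp (u x) * v x - ∫ x', Complex.exp (u x') * v x' ∂ν‖ ^ 2 ∂ν ≤
      ((1 + e) ^ 3 * relVar ν v + 4 * (1 + e⁻¹) * ∫ x, ‖u x‖ ^ 2 ∂ν) * ‖∫ x, v x ∂ν‖ ^ 2 := by
  rw [relVar]
  set a := ∫ x, v x ∂ν
  have ha0 : ‖a‖ ≠ 0 := norm_ne_zero_iff.2 hv0
  have husq := (hu.integrable_normSq ν).const_mul (4 * (1 + e⁻¹) * ‖a‖ ^ 2)
  have hvsq := ((hv.sub (.const a)).integrable_normSq ν).const_mul ((1 + e) ^ 3)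
  calc ∫ x, ‖Complex.exp (u x) * v x - ∫ x', Complex.exp (u x') * v x' ∂ν‖ ^ 2 ∂ν
      ≤ ∫ x, ‖Complex.exp (u x) * v x - a‖ ^ 2 ∂ν :=
        (hu.cexp.mul hv).integral_normSq_sub_integral_le ν a
    _ ≤ ∫ x, ((1 + e) ^ 3 * ‖v x - a‖ ^ 2 + 4 * (1 + e⁻¹) * ‖a‖ ^ 2 * ‖u x‖ ^ 2) ∂ν :=
        integral_mono (((hu.cexp.mul hv).sub (.const a)).integrable_normSq ν) (hvsq.add husq)
          fun x => normSq_cexp_mul_sub_le he he1 (hue x) _ _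
    _ = (1 + e) ^ 3 * ∫ x, ‖v x - a‖ ^ 2 ∂ν + 4 * (1 + e⁻¹) * ‖a‖ ^ 2 * ∫ x, ‖u x‖ ^ 2 ∂ν := by
        rw [integral_add hvsq husq, integral_const_mul, integral_const_mul]
    _ = _ := by field_simp

lemma integral_normSq_le_sq (hu : BddMeasurable m u) {M : ℝ} (hM : ∀ x, ‖u x‖ ≤ M) :
    ∫ x, ‖u x‖ ^ 2 ∂ν ≤ M ^ 2 := by
  simpa using integral_mono (hu.integrable_normSq ν) (integrable_const (M ^ 2))
    fun x => pow_le_pow_left₀ (norm_nonneg _) (hM x) 2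

lemma two_mul_integral_normSq_add_relVar_le (hu : BddMeasurable m u) (he : 0 < e)
    (he1 : e ≤ 1 / 16) (hue : ∀ x, ‖u x‖ ≤ e ^ 2 / 4) (hve : relVar ν v ≤ e) :
    2 * ∫ x, ‖u x‖ ^ 2 ∂ν + relVar ν v ≤ 2 * e := by
  have hw := hu.integral_normSq_le_sq (ν := ν) hue
  have he2 : e ^ 2 ≤ 1 := by nlinarith
  nlinarith

lemma one_sub_two_mul_le_norm_integral_cexp_mul_div (hu : BddMeasurable m u)
    (hv : BddMeasurable m v) (hu0 : ∫ x, u x ∂ν = 0) (he : 0 < e) (he1 : e ≤ 1 / 16)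
    (hue : ∀ x, ‖u x‖ ≤ e ^ 2 / 4) (hv0 : ∫ x, v x ∂ν ≠ 0) (hve : relVar ν v ≤ e) :
    1 - 2 * e ≤ ‖(∫ x, Complex.exp (u x) * v x ∂ν) / ∫ x, v x ∂ν‖ := by
  have hratio := hu.norm_integral_cexp_mul_div_sub_one_le hv hu0
    (fun x => (hue x).trans (by nlinarith)) hv0
  have htri := norm_le_norm_add_norm_sub ((∫ x, Complex.exp (u x) * v x ∂ν) / ∫ x, v x ∂ν) 1
  rw [norm_one] at htri
  linarith [hu.two_mul_integral_normSq_add_relVar_le he he1 hue hve]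

lemma integral_cexp_mul_ne_zero (hu : BddMeasurable m u)
    (hv : BddMeasurable m v) (hu0 : ∫ x, u x ∂ν = 0) (he : 0 < e) (he1 : e ≤ 1 / 16)
    (hue : ∀ x, ‖u x‖ ≤ e ^ 2 / 4) (hv0 : ∫ x, v x ∂ν ≠ 0) (hve : relVar ν v ≤ e) :
    ∫ x, Complex.exp (u x) * v x ∂ν ≠ 0 := by
  intro hzero
  have := hu.one_sub_two_mul_le_norm_integral_cexp_mul_div hv hu0 he he1 hue hv0 hve
  rw [hzero, zero_div, norm_zero] at this
  linarith

lemma one_sub_mul_relVar_cexp_mul_le (hu : BddMeasurable m u)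
    (hv : BddMeasurable m v) (hu0 : ∫ x, u x ∂ν = 0) (he : 0 < e) (he1 : e ≤ 1 / 16)
    (hue : ∀ x, ‖u x‖ ≤ e ^ 2 / 4) (hv0 : ∫ x, v x ∂ν ≠ 0) (hve : relVar ν v ≤ e) :
    (1 - 16 * e) * relVar ν (fun x => Complex.exp (u x) * v x) ≤
      (1 - e) * relVar ν v + 7 / e * ∫ x, ‖u x‖ ^ 2 ∂ν := by
  have htilt : 0 < ‖∫ x, Complex.exp (u x) * v x ∂ν‖ :=
    norm_pos_iff.2 (hu.integral_cexp_mul_ne_zero hv hu0 he he1 hue hv0 hve)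
  have hreal := tilted_relVar_le he he1 (relVar_nonneg ν v)
    (integral_nonneg (μ := ν) fun x => sq_nonneg ‖u x‖)
    (hu.one_sub_two_mul_le_norm_integral_cexp_mul_div hv hu0 he he1 hue hv0 hve)
  have hvar := hu.integral_normSq_cexp_mul_sub_le hv he (by linarith)
    (fun x => by nlinarith [hue x]) hv0
  rw [relVar, mul_div_assoc', div_le_iff₀ (by positivity)]
  refine (mul_le_mul_of_nonneg_left hvar (by linarith)).trans ?_
  rw [norm_div, div_pow, mul_div_assoc', le_div_iff₀ (by positivity)] at hreal
  linarith

end BddMeasurable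

/-! ### Moment generating functions along a Doeblin chain -/

/-- The conditional expectation of `exp (z * (y (n + 1) (X (n + 1)) + ⋯ + y (n + k) (X (n + k))))`
given `X n = x`, for a Markov chain `X` with kernels `κ`. -/
def condMGF (κ : ℕ → Kernel E E) (y : ℕ → E → ℂ) (z : ℂ) : ℕ → ℕ → E → ℂ
  | _, 0 => fun _ => 1
  | n, k + 1 => fun x => ∫ u, Complex.exp (z * y (n + 1) u) * condMGF κ y z (n + 1) k u ∂κ n x

/-- The moment generating function of `y (n + 1) (X (n + 1)) + ⋯ + y (n + k) (X (n + k))`. -/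
def tailMGF {F : Type*} (μ : Measure Ω) (X : ℕ → Ω → F) (y : ℕ → F → ℂ) (n k : ℕ) (z : ℂ) : ℂ :=
  ∫ ω, Complex.exp (z * tailSum (fun m => y m (X m ω)) n k) ∂μ

/-- The relative variance of `condMGF` along the chain. -/
def condRelVar (μ : Measure Ω) (X : ℕ → Ω → E) (κ : ℕ → Kernel E E) (y : ℕ → E → ℂ) (z : ℂ)
    (n k : ℕ) : ℝ :=
  relVar μ (fun ω => condMGF κ y z n k (X n ω))

/-- The logarithm of `tailMGF`, as a sum of principal logarithms of successive ratios. -/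
def logMGF {F : Type*} (μ : Measure Ω) (X : ℕ → Ω → F) (y : ℕ → F → ℂ) : ℕ → ℕ → ℂ → ℂ
  | _, 0 => fun _ => 0
  | n, k + 1 => fun z => logMGF μ X y (n + 1) k z +
      Complex.log (tailMGF μ X y n (k + 1) z / tailMGF μ X y (n + 1) k z)

/-- The observables `y n` of a process `X` are measurable, bounded by `L` and have mean zero. -/
structure IsCenteredBounded (μ : Measure Ω) (X : ℕ → Ω → E) (y : ℕ → E → ℂ) (L : ℝ) :
    Prop where
  measurable (n : ℕ) : Measurable (y n)
  norm_le (n : ℕ) (x : E) : ‖y n x‖ ≤ L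
  integral_eq_zero (n : ℕ) : ∫ ω, y n (X n ω) ∂μ = 0

section MomentGeneratingFunction

variable {μ : Measure Ω} {X : ℕ → Ω → E} {κ : ℕ → Kernel E E} {c : ℝ} {y : ℕ → E → ℂ} {L : ℝ}

lemma IsCenteredBounded.bddMeasurable (hy : IsCenteredBounded μ X y L) (n : ℕ) :
    BddMeasurable inferInstance (y n) :=
  ⟨hy.measurable n, L, hy.norm_le n⟩

lemma IsCenteredBounded.bddMeasurable_increment (hy : IsCenteredBounded μ X y L)
    (hX : ∀ n, Measurable (X n)) (z : ℂ) (n : ℕ) :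
    BddMeasurable inferInstance (fun ω => z * y n (X n ω)) :=
  (BddMeasurable.const z).mul ((hy.bddMeasurable n).comp (hX n))

lemma IsCenteredBounded.integral_increment (hy : IsCenteredBounded μ X y L) (z : ℂ) (n : ℕ) :
    ∫ ω, z * y n (X n ω) ∂μ = 0 := by
  rw [integral_const_mul, hy.integral_eq_zero, mul_zero]

lemma IsCenteredBounded.norm_increment_le (hy : IsCenteredBounded μ X y L) (z : ℂ) (n : ℕ)
    (x : E) : ‖z * y n x‖ ≤ ‖z‖ * L := by
  rw [norm_mul]
  exact mul_le_mul_of_nonneg_left (hy.norm_le n x) (norm_nonneg z)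

lemma integral_normSq_increment {F : Type*} (μ : Measure Ω) (X : ℕ → Ω → F) (y : ℕ → F → ℂ)
    (z : ℂ) (n : ℕ) :
    ∫ ω, ‖z * y n (X n ω)‖ ^ 2 ∂μ = ‖z‖ ^ 2 * secondMoment μ X y n := by
  simp only [norm_mul, mul_pow, integral_const_mul, secondMoment]

lemma differentiable_tailMGF [IsFiniteMeasure μ] (hX : ∀ n, Measurable (X n))
    (hy : ∀ n, BddMeasurable inferInstance (y n)) (n k : ℕ) :
    Differentiable ℂ (tailMGF μ X y n k) := fun z => by
  have hderiv := BddMeasurable.hasDerivAt_integral_mul_cexp (.const 1)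
    (bddMeasurable_tailSum hX hy n k) μ z
  simp only [one_mul] at hderiv
  exact hderiv.differentiableAt

lemma logMGF_zero_right {F : Type*} (μ : Measure Ω) [IsProbabilityMeasure μ] (X : ℕ → Ω → F)
    (y : ℕ → F → ℂ) (n k : ℕ) : logMGF μ X y n k 0 = 0 := by
  induction k generalizing n with
  | zero => rfl
  | succ k ih => simp [logMGF, ih, tailMGF]

lemma IsCenteredBounded.normSq_mul_secondMoment_le [IsProbabilityMeasure μ]
    (hy : IsCenteredBounded μ X y L) (hX : ∀ n, Measurable (X n)) {z : ℂ} {M : ℝ}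
    (hz : ‖z‖ * L ≤ M) (n : ℕ) : ‖z‖ ^ 2 * secondMoment μ X y n ≤ M ^ 2 := by
  rw [← integral_normSq_increment]
  exact (hy.bddMeasurable_increment hX z n).integral_normSq_le_sq
    fun ω => (hy.norm_increment_le z n _).trans hz

variable [∀ n, IsMarkovKernel (κ n)]

lemma bddMeasurable_cexp_mul_condMGF (hy : ∀ n, BddMeasurable inferInstance (y n)) (z : ℂ)
    (n k : ℕ) : BddMeasurable inferInstance
      (fun u => Complex.exp (z * y n u) * condMGF κ y z n k u) := by
  refine ((BddMeasurable.const z).mul (hy n)).cexp.mul ?_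
  induction k generalizing n with
  | zero => exact .const 1
  | succ k ih =>
    exact (((BddMeasurable.const z).mul (hy (n + 1))).cexp.mul (ih (n + 1))).kernel (κ n)

lemma bddMeasurable_condMGF (hy : ∀ n, BddMeasurable inferInstance (y n)) (z : ℂ) (n k : ℕ) :
    BddMeasurable inferInstance (condMGF κ y z n k) := by
  cases k with
  | zero => exact .const 1
  | succ k => exact (bddMeasurable_cexp_mul_condMGF hy z (n + 1) k).kernel (κ n)

variable [IsProbabilityMeasure μ]

namespace IsMarkovChain

lemma integral_mul_condMGF (h : IsMarkovChain μ X κ)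
    (hy : ∀ n, BddMeasurable inferInstance (y n)) (z : ℂ) (n k : ℕ) {Z : Ω → ℂ}
    (hZ : BddMeasurable (past X n) Z) :
    ∫ ω, Z ω * condMGF κ y z n k (X n ω) ∂μ =
      ∫ ω, Z ω * Complex.exp (z * tailSum (fun m => y m (X m ω)) n k) ∂μ := by
  induction k generalizing n Z with
  | zero => simp [condMGF]
  | succ k ih =>
    have hexp : BddMeasurable inferInstance (fun u => Complex.exp (z * y (n + 1) u)) :=
      ((BddMeasurable.const z).mul (hy (n + 1))).cexp
    simp only [condMGF, tailSum_succ]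
    rw [← h.integral_mul_succ n hZ (bddMeasurable_cexp_mul_condMGF hy z (n + 1) k)]
    simp only [← mul_assoc]
    rw [ih (n + 1) ((hZ.mono (past_mono X n)).mul (hexp.comp (measurable_past X le_rfl)))]
    simp only [mul_add, Complex.exp_add, mul_assoc]

lemma integral_condMGF (h : IsMarkovChain μ X κ)
    (hy : ∀ n, BddMeasurable inferInstance (y n)) (z : ℂ) (n k : ℕ) :
    ∫ ω, condMGF κ y z n k (X n ω) ∂μ = tailMGF μ X y n k z := by
  simpa [tailMGF] using h.integral_mul_condMGF hy z n k (.const 1)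

lemma tailMGF_succ (h : IsMarkovChain μ X κ) (hy : ∀ n, BddMeasurable inferInstance (y n))
    (z : ℂ) (n k : ℕ) : tailMGF μ X y n (k + 1) z = ∫ ω, Complex.exp (z * y (n + 1) (X (n + 1) ω)) *
      condMGF κ y z (n + 1) k (X (n + 1) ω) ∂μ := by
  rw [← h.integral_condMGF hy]
  exact h.integral_succ n (bddMeasurable_cexp_mul_condMGF hy z (n + 1) k)

end IsMarkovChain

namespace IsDoeblinChain

lemma relVar_kernel_le (h : IsDoeblinChain μ X κ c) (n : ℕ) {g : E → ℂ}
    (hg : BddMeasurable inferInstance g) :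
    relVar μ (fun ω => ∫ u, g u ∂κ n (X n ω)) ≤ (1 - c) * relVar μ (fun ω => g (X (n + 1) ω)) := by
  set a := ∫ ω, g (X (n + 1) ω) ∂μ with ha
  have hgX := hg.comp (h.measurable (n + 1))
  have hgap := h.spectral_gap n (hg.sub (.const a)) (by
    rw [integral_sub (hgX.integrable μ) (integrable_const _), ← ha]
    simp)
  have hkernel (ω : Ω) : ∫ u, (g u - a) ∂κ n (X n ω) = (∫ u, g u ∂κ n (X n ω)) - a := by
    rw [integral_sub (hg.integrable _) (integrable_const _)]
    simp
  simp_rw [hkernel] at hgap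
  rw [relVar, relVar, h.integral_succ n hg, ← mul_div_assoc, ← ha]
  gcongr

variable {e : ℝ} {z : ℂ}

lemma le_one_sixteenth (h : IsDoeblinChain μ X κ c) (hec : 16 * e ≤ c) : e ≤ 1 / 16 := by
  linarith [h.le_one]

section Step

variable {n k : ℕ}

lemma tailMGF_succ_ne_zero (h : IsDoeblinChain μ X κ c) (hy : IsCenteredBounded μ X y L)
    (he : 0 < e) (hec : 16 * e ≤ c) (hz : ‖z‖ * L ≤ e ^ 2 / 4)
    (hφ : tailMGF μ X y (n + 1) k z ≠ 0) (hR : condRelVar μ X κ y z (n + 1) k ≤ e) :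
    tailMGF μ X y n (k + 1) z ≠ 0 := by
  rw [← h.integral_condMGF hy.bddMeasurable] at hφ
  rw [h.tailMGF_succ hy.bddMeasurable]
  exact (hy.bddMeasurable_increment h.measurable z (n + 1)).integral_cexp_mul_ne_zero
    ((bddMeasurable_condMGF hy.bddMeasurable z (n + 1) k).comp (h.measurable (n + 1)))
    (hy.integral_increment z (n + 1)) he (h.le_one_sixteenth hec)
    (fun ω => (hy.norm_increment_le z (n + 1) _).trans hz) hφ hR

-- Averaging over one step gains the factor `1 - c ≤ 1 - 16 * e`, which pays for the tilt.
lemma condRelVar_succ_le_of_le (h : IsDoeblinChain μ X κ c) (hy : IsCenteredBounded μ X y L)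
    (he : 0 < e) (hec : 16 * e ≤ c) (hz : ‖z‖ * L ≤ e ^ 2 / 4)
    (hφ : tailMGF μ X y (n + 1) k z ≠ 0) (hR : condRelVar μ X κ y z (n + 1) k ≤ e) :
    condRelVar μ X κ y z n (k + 1) ≤ (1 - e) * condRelVar μ X κ y z (n + 1) k +
      7 / e * (‖z‖ ^ 2 * secondMoment μ X y (n + 1)) := by
  rw [← h.integral_condMGF hy.bddMeasurable] at hφ
  have htilt := (hy.bddMeasurable_increment h.measurable z (n + 1)).one_sub_mul_relVar_cexp_mul_le
    ((bddMeasurable_condMGF hy.bddMeasurable z (n + 1) k).comp (h.measurable (n + 1)))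
    (hy.integral_increment z (n + 1)) he (h.le_one_sixteenth hec)
    (fun ω => (hy.norm_increment_le z (n + 1) _).trans hz) hφ hR
  rw [integral_normSq_increment] at htilt
  refine (h.relVar_kernel_le n (bddMeasurable_cexp_mul_condMGF hy.bddMeasurable z (n + 1) k)).trans
    (le_trans ?_ htilt)
  exact mul_le_mul_of_nonneg_right (by linarith) (relVar_nonneg _ _)

end Step

lemma tailMGF_ne_zero_and_condRelVar_le (h : IsDoeblinChain μ X κ c)
    (hy : IsCenteredBounded μ X y L) (he : 0 < e) (hec : 16 * e ≤ c)
    (hz : ‖z‖ * L ≤ e ^ 2 / 4) (n k : ℕ) :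
    tailMGF μ X y n k z ≠ 0 ∧ condRelVar μ X κ y z n k ≤ e := by
  induction k generalizing n with
  | zero => simp [tailMGF, condRelVar, condMGF, relVar_const, he.le]
  | succ k ih =>
    obtain ⟨hφ, hR⟩ := ih (n + 1)
    refine ⟨h.tailMGF_succ_ne_zero hy he hec hz hφ hR,
      (h.condRelVar_succ_le_of_le hy he hec hz hφ hR).trans ?_⟩
    have he1 := h.le_one_sixteenth hec
    have hsource : 7 / e * (‖z‖ ^ 2 * secondMoment μ X y (n + 1)) ≤ e ^ 2 := by
      refine (mul_le_mul_of_nonneg_left (hy.normSq_mul_secondMoment_le h.measurable hz (n + 1))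
        (by positivity)).trans ?_
      rw [show 7 / e * (e ^ 2 / 4) ^ 2 = 7 / 16 * e * e ^ 2 by field_simp; ring]
      exact mul_le_of_le_one_left (by positivity) (by linarith)
    calc (1 - e) * condRelVar μ X κ y z (n + 1) k +
          7 / e * (‖z‖ ^ 2 * secondMoment μ X y (n + 1))
        ≤ (1 - e) * e + e ^ 2 := by gcongr; linarith
      _ = e := by ring

lemma tailMGF_ne_zero (h : IsDoeblinChain μ X κ c) (hy : IsCenteredBounded μ X y L)
    (he : 0 < e) (hec : 16 * e ≤ c) (hz : ‖z‖ * L ≤ e ^ 2 / 4) (n k : ℕ) :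
    tailMGF μ X y n k z ≠ 0 :=
  (h.tailMGF_ne_zero_and_condRelVar_le hy he hec hz n k).1

lemma condRelVar_le (h : IsDoeblinChain μ X κ c) (hy : IsCenteredBounded μ X y L)
    (he : 0 < e) (hec : 16 * e ≤ c) (hz : ‖z‖ * L ≤ e ^ 2 / 4) (n k : ℕ) :
    condRelVar μ X κ y z n k ≤ e :=
  (h.tailMGF_ne_zero_and_condRelVar_le hy he hec hz n k).2

lemma condRelVar_succ_le (h : IsDoeblinChain μ X κ c) (hy : IsCenteredBounded μ X y L)
    (he : 0 < e) (hec : 16 * e ≤ c) (hz : ‖z‖ * L ≤ e ^ 2 / 4) (n k : ℕ) :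
    condRelVar μ X κ y z n (k + 1) ≤ (1 - e) * condRelVar μ X κ y z (n + 1) k +
      7 / e * (‖z‖ ^ 2 * secondMoment μ X y (n + 1)) :=
  h.condRelVar_succ_le_of_le hy he hec hz (h.tailMGF_ne_zero hy he hec hz (n + 1) k)
    (h.condRelVar_le hy he hec hz (n + 1) k)

lemma norm_tailMGF_div_sub_one_le (h : IsDoeblinChain μ X κ c) (hy : IsCenteredBounded μ X y L)
    (he : 0 < e) (hec : 16 * e ≤ c) (hz : ‖z‖ * L ≤ e ^ 2 / 4) (n k : ℕ) :
    ‖tailMGF μ X y n (k + 1) z / tailMGF μ X y (n + 1) k z - 1‖ ≤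
      2 * (‖z‖ ^ 2 * secondMoment μ X y (n + 1)) + condRelVar μ X κ y z (n + 1) k := by
  have hφ := h.tailMGF_ne_zero hy he hec hz (n + 1) k
  rw [← h.integral_condMGF hy.bddMeasurable] at hφ
  rw [h.tailMGF_succ hy.bddMeasurable, ← h.integral_condMGF hy.bddMeasurable z (n + 1) k,
    ← integral_normSq_increment]
  have he1 := h.le_one_sixteenth hec
  exact (hy.bddMeasurable_increment h.measurable z (n + 1)).norm_integral_cexp_mul_div_sub_one_le
    ((bddMeasurable_condMGF hy.bddMeasurable z (n + 1) k).comp (h.measurable (n + 1)))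
    (hy.integral_increment z (n + 1))
    (fun ω => (hy.norm_increment_le z (n + 1) _).trans (hz.trans (by nlinarith))) hφ

lemma norm_tailMGF_div_sub_one_le_half (h : IsDoeblinChain μ X κ c)
    (hy : IsCenteredBounded μ X y L) (he : 0 < e) (hec : 16 * e ≤ c)
    (hz : ‖z‖ * L ≤ e ^ 2 / 4) (n k : ℕ) :
    ‖tailMGF μ X y n (k + 1) z / tailMGF μ X y (n + 1) k z - 1‖ ≤ 1 / 2 := by
  have hsmall := (hy.bddMeasurable_increment h.measurable z
    (n + 1)).two_mul_integral_normSq_add_relVar_le he (h.le_one_sixteenth hec)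
    (fun ω => (hy.norm_increment_le z (n + 1) _).trans hz) (h.condRelVar_le hy he hec hz (n + 1) k)
  rw [integral_normSq_increment] at hsmall
  refine (h.norm_tailMGF_div_sub_one_le hy he hec hz n k).trans (hsmall.trans ?_)
  linarith [h.le_one_sixteenth hec]

lemma exp_logMGF (h : IsDoeblinChain μ X κ c) (hy : IsCenteredBounded μ X y L)
    (he : 0 < e) (hec : 16 * e ≤ c) (hz : ‖z‖ * L ≤ e ^ 2 / 4) (n k : ℕ) :
    Complex.exp (logMGF μ X y n k z) = tailMGF μ X y n k z := by
  induction k generalizing n with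
  | zero => simp [logMGF, tailMGF]
  | succ k ih =>
    have hφ := h.tailMGF_ne_zero hy he hec hz (n + 1) k
    rw [logMGF, Complex.exp_add, ih (n + 1),
      Complex.exp_log (div_ne_zero (h.tailMGF_ne_zero hy he hec hz n (k + 1)) hφ),
      mul_div_cancel₀ _ hφ]

-- Adding a multiple of the relative variance makes the estimate inductive: the decay of
-- `condRelVar` absorbs its own contribution to each successive ratio.
lemma norm_logMGF_add_condRelVar_le (h : IsDoeblinChain μ X κ c) (hy : IsCenteredBounded μ X y L)
    (he : 0 < e) (hec : 16 * e ≤ c) (hz : ‖z‖ * L ≤ e ^ 2 / 4) (n k : ℕ) :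
    ‖logMGF μ X y n k z‖ + 2 / e * condRelVar μ X κ y z n k ≤
      (3 + 14 / e ^ 2) * (‖z‖ ^ 2 * tailSum (secondMoment μ X y) n k) := by
  induction k generalizing n with
  | zero => simp [logMGF, condRelVar, condMGF, relVar_const]
  | succ k ih =>
    have hlog := Complex.norm_log_one_add_half_le_self
      (h.norm_tailMGF_div_sub_one_le_half hy he hec hz n k)
    rw [add_sub_cancel] at hlog
    have hratio := h.norm_tailMGF_div_sub_one_le hy he hec hz n k
    have hR := relVar_nonneg μ (fun ω => condMGF κ y z (n + 1) k (X (n + 1) ω))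
    have hdecay := mul_le_mul_of_nonneg_left (h.condRelVar_succ_le hy he hec hz n k)
      (show 0 ≤ 2 / e by positivity)
    rw [logMGF, tailSum_succ]
    set R := condRelVar μ X κ y z (n + 1) k
    set w := ‖z‖ ^ 2 * secondMoment μ X y (n + 1) with hw
    rw [show 2 / e * ((1 - e) * R + 7 / e * w) = 2 / e * R - 2 * R + 14 / e ^ 2 * w by
      field_simp; ring] at hdecay
    rw [mul_add, mul_add, ← hw]
    have htri := norm_add_le (logMGF μ X y (n + 1) k z)
      (Complex.log (tailMGF μ X y n (k + 1) z / tailMGF μ X y (n + 1) k z))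
    change 0 ≤ R at hR
    linarith [ih (n + 1)]

lemma norm_logMGF_le (h : IsDoeblinChain μ X κ c) (hy : IsCenteredBounded μ X y L)
    (he : 0 < e) (hec : 16 * e ≤ c) (hz : ‖z‖ * L ≤ e ^ 2 / 4) (n k : ℕ) :
    ‖logMGF μ X y n k z‖ ≤
      (3 + 14 / e ^ 2) * (‖z‖ ^ 2 * tailSum (secondMoment μ X y) n k) :=
  le_of_add_le_of_nonneg_left (h.norm_logMGF_add_condRelVar_le hy he hec hz n k)
    (mul_nonneg (by positivity) (relVar_nonneg _ _))

lemma differentiableOn_logMGF (h : IsDoeblinChain μ X κ c) (hy : IsCenteredBounded μ X y L)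
    (he : 0 < e) (hec : 16 * e ≤ c) (n k : ℕ) :
    DifferentiableOn ℂ (logMGF μ X y n k) {z | ‖z‖ * L ≤ e ^ 2 / 4} := by
  induction k generalizing n with
  | zero => exact differentiableOn_const 0
  | succ k ih =>
    have hdiff (n k : ℕ) := (differentiable_tailMGF (μ := μ) h.measurable hy.bddMeasurable
      n k).differentiableOn (s := {z | ‖z‖ * L ≤ e ^ 2 / 4})
    refine (ih (n + 1)).add (DifferentiableOn.clog ?_ fun z hz => ?_)
    · exact (hdiff n (k + 1)).div (hdiff (n + 1) k)
        fun z hz => h.tailMGF_ne_zero hy he hec hz (n + 1) k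
    · have hhalf := h.norm_tailMGF_div_sub_one_le_half hy he hec hz n k
      simpa using Complex.mem_slitPlane_of_norm_lt_one (hhalf.trans_lt one_half_lt_one)

end IsDoeblinChain

end MomentGeneratingFunction

/-! ### Expansion of the moment generating functions -/

section Expansion

variable {μ : Measure Ω} [IsProbabilityMeasure μ] {X : ℕ → Ω → E} {κ : ℕ → Kernel E E}
  {c : ℝ} {y : ℕ → E → ℂ} {L : ℝ}

lemma IsCenteredBounded.nonneg (hy : IsCenteredBounded μ X y L) : 0 ≤ L := by
  obtain ⟨ω⟩ := nonempty_of_isProbabilityMeasure μ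
  exact (norm_nonneg _).trans (hy.norm_le 0 (X 0 ω))

lemma IsCenteredBounded.integral_tailSum (hy : IsCenteredBounded μ X y L)
    (hX : ∀ n, Measurable (X n)) (n k : ℕ) :
    ∫ ω, tailSum (fun m => y m (X m ω)) n k ∂μ = 0 := by
  simp only [tailSum]
  rw [integral_finsetSum _ fun i _ => ((hy.bddMeasurable _).comp (hX _)).integrable μ]
  exact sum_eq_zero fun i _ => hy.integral_eq_zero _

namespace IsDoeblinChain

variable [∀ n, IsMarkovKernel (κ n)] {e ρ : ℝ}

lemma isBoundedHolomorphic_logMGF (h : IsDoeblinChain μ X κ c) (hy : IsCenteredBounded μ X y L)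
    (he : 0 < e) (hec : 16 * e ≤ c) (hρ : ρ * L ≤ e ^ 2 / 4) (n k : ℕ) :
    IsBoundedHolomorphic ρ ((3 + 14 / e ^ 2) * (ρ ^ 2 * (4 / c)) *
      ∫ ω, ‖tailSum (fun m => y m (X m ω)) n k‖ ^ 2 ∂μ) (logMGF μ X y n k) := by
  have hball (z : ℂ) (hz : z ∈ Metric.ball (0 : ℂ) ρ) : ‖z‖ ≤ ρ := (mem_ball_zero_iff.1 hz).le
  have hzL (z : ℂ) (hz : z ∈ Metric.ball (0 : ℂ) ρ) : ‖z‖ * L ≤ e ^ 2 / 4 :=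
    (mul_le_mul_of_nonneg_right (hball z hz) hy.nonneg).trans hρ
  refine ⟨(h.differentiableOn_logMGF hy he hec n k).mono hzL, fun z hz => ?_⟩
  have hmoment := h.tailSum_secondMoment_le hy.bddMeasurable hy.integral_eq_zero n k
  calc ‖logMGF μ X y n k z‖
      ≤ (3 + 14 / e ^ 2) * (‖z‖ ^ 2 * tailSum (secondMoment μ X y) n k) :=
        h.norm_logMGF_le hy he hec (hzL z hz) n k
    _ ≤ (3 + 14 / e ^ 2) * (ρ ^ 2 *
          (4 / c * ∫ ω, ‖tailSum (fun m => y m (X m ω)) n k‖ ^ 2 ∂μ)) := by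
        gcongr
        · exact tailSum_nonneg (secondMoment_nonneg μ X y) n k
        · exact hball z hz
    _ = _ := by ring

lemma logMGF_eq_sq_add_cube_mul (h : IsDoeblinChain μ X κ c) (hy : IsCenteredBounded μ X y L)
    (he : 0 < e) (hec : 16 * e ≤ c) (hρ0 : 0 < ρ) (hρ : ρ * L ≤ e ^ 2 / 4) (n k : ℕ) (z : ℂ) :
    logMGF μ X y n k z = (∫ ω, tailSum (fun m => y m (X m ω)) n k ^ 2 ∂μ) * z ^ 2 / 2 +
      z ^ 3 * taylorQuotient (logMGF μ X y n k) 3 z := by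
  have hT := bddMeasurable_tailSum h.measurable hy.bddMeasurable n k
  have hderiv (z : ℂ) := (BddMeasurable.const 1).hasDerivAt_integral_mul_cexp hT μ z
  have hderiv2 := hT.hasDerivAt_integral_mul_cexp hT μ 0
  simp only [one_mul] at hderiv
  refine log_eq_sq_add_cube_mul_taylorQuotient hρ0
    (h.isBoundedHolomorphic_logMGF hy he hec hρ n k).differentiableOn
    (logMGF_zero_right μ X y n k) (fun w hw => h.exp_logMGF hy he hec ?_ n k) hderiv
    (by simpa using hy.integral_tailSum h.measurable n k) (by simpa [← pow_two] using hderiv2) z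
  exact (mul_le_mul_of_nonneg_right (mem_ball_zero_iff.1 hw).le hy.nonneg).trans hρ

lemma exists_tailMGF_eq (h : IsDoeblinChain μ X κ c) (hy : IsCenteredBounded μ X y L) :
    ∃ ρ B : ℝ, 0 < ρ ∧ ∀ n k, ∃ q, IsBoundedHolomorphic ρ B q ∧ ∀ z ∈ Metric.ball (0 : ℂ) ρ,
      tailMGF μ X y n k z = Complex.exp (
        (∫ ω, tailSum (fun m => y m (X m ω)) n k ^ 2 ∂μ) * z ^ 2 / 2 +
          (∫ ω, ‖tailSum (fun m => y m (X m ω)) n k‖ ^ 2 ∂μ : ℝ) * z ^ 3 * q z) := by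
  have hc := h.pos
  have hL := hy.nonneg
  set e := c / 16
  have he : 0 < e := by positivity
  have hec : 16 * e ≤ c := (mul_div_cancel₀ c (by norm_num)).le
  set ρ := e ^ 2 / 4 / (L + 1)
  have hρ0 : 0 < ρ := by positivity
  have hρ : ρ * (L + 1) = e ^ 2 / 4 := div_mul_cancel₀ _ (by positivity)
  have hρL : ρ * L ≤ e ^ 2 / 4 := by linarith
  refine ⟨ρ, (3 + 14 / e ^ 2) * (ρ ^ 2 * (4 / c)) * (2 / ρ) ^ 3, hρ0, fun n k => ?_⟩
  have hquot := (h.isBoundedHolomorphic_logMGF hy he hec hρL n k).taylorQuotient hρ0 3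
  rw [mul_right_comm] at hquot
  obtain ⟨q, hq, hqeq⟩ := hquot.exists_eq_mul (by positivity)
    (integral_nonneg fun ω => by positivity)
  refine ⟨q, hq, fun z hz => ?_⟩
  rw [← h.exp_logMGF hy he hec
      ((mul_le_mul_of_nonneg_right (mem_ball_zero_iff.1 hz).le hL).trans hρL),
    h.logMGF_eq_sq_add_cube_mul hy he hec hρ0 hρL, hqeq z hz]
  congr 2
  ring

end IsDoeblinChain

end Expansion

/-! ### Centering -/

/-- The partial sums `g 1 (X 1) + ⋯ + g N (X N)` of a real-valued observable. -/
def partialSum {Ω' F : Type*} (X : ℕ → Ω' → F) (g : ℕ → F → ℝ) (N : ℕ) (ω : Ω') : ℝ :=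
  ∑ n ∈ Icc 1 N, g n (X n ω)

/-- The observable `g n`, clipped to `[-L, L]` and centered along the process `X`. When `g n` is
bounded by `L` along `X`, clipping makes it bounded on the whole state space without changing the
process. -/
def centered {F : Type*} (μ : Measure Ω) (X : ℕ → Ω → F) (g : ℕ → F → ℝ) (L : ℝ) (n : ℕ)
    (x : F) : ℝ :=
  max (-L) (min L (g n x)) - ∫ ω, g n (X n ω) ∂μ

lemma centered_apply {F : Type*} {μ : Measure Ω} {X : ℕ → Ω → F} {g : ℕ → F → ℝ} {L : ℝ}
    (hgL : ∀ n ω, |g n (X n ω)| ≤ L) (n : ℕ) (ω : Ω) :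
    centered μ X g L n (X n ω) = g n (X n ω) - ∫ ω', g n (X n ω') ∂μ := by
  obtain ⟨hlower, hupper⟩ := abs_le.1 (hgL n ω)
  rw [centered, min_eq_right hupper, max_eq_right hlower]

lemma abs_centered_le {F : Type*} {μ : Measure Ω} [IsProbabilityMeasure μ] {X : ℕ → Ω → F}
    {g : ℕ → F → ℝ} {L : ℝ} (hgL : ∀ n ω, |g n (X n ω)| ≤ L) (n : ℕ) (x : F) :
    |centered μ X g L n x| ≤ 2 * L := by
  obtain ⟨ω⟩ := nonempty_of_isProbabilityMeasure μ
  have hL : 0 ≤ L := (abs_nonneg _).trans (hgL 0 ω)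
  have hclip : |max (-L) (min L (g n x))| ≤ L :=
    abs_le.2 ⟨le_max_left _ _, max_le (by linarith) (min_le_left _ _)⟩
  have hmean : |∫ ω, g n (X n ω) ∂μ| ≤ L := by
    simpa using norm_integral_le_of_norm_le_const (μ := μ) (f := fun ω => g n (X n ω))
      (.of_forall (hgL n))
  rw [centered]
  linarith [abs_sub (max (-L) (min L (g n x))) (∫ ω, g n (X n ω) ∂μ)]

section Centering

variable {μ : Measure Ω} [IsProbabilityMeasure μ] {X : ℕ → Ω → E} {g : ℕ → E → ℝ} {L : ℝ}

lemma integrable_observable (hX : ∀ n, Measurable (X n)) (hg : ∀ n, Measurable (g n))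
    (hgL : ∀ n ω, |g n (X n ω)| ≤ L) (n : ℕ) : Integrable (fun ω => g n (X n ω)) μ :=
  .of_bound ((hg n).comp (hX n)).aestronglyMeasurable L (.of_forall (hgL n))

lemma measurable_partialSum (hX : ∀ n, Measurable (X n)) (hg : ∀ n, Measurable (g n)) (N : ℕ) :
    Measurable (partialSum X g N) :=
  Finset.measurable_fun_sum _ fun n _ => (hg n).comp (hX n)

lemma isCenteredBounded_centered (hX : ∀ n, Measurable (X n)) (hg : ∀ n, Measurable (g n))
    (hgL : ∀ n ω, |g n (X n ω)| ≤ L) :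
    IsCenteredBounded μ X (fun n x => (centered μ X g L n x : ℂ)) (2 * L) where
  measurable n := Complex.measurable_ofReal.comp
    ((measurable_const.max (measurable_const.min (hg n))).sub_const _)
  norm_le n x := by
    rw [Complex.norm_real]
    exact abs_centered_le hgL n x
  integral_eq_zero n := by
    simp only [centered_apply hgL]
    rw [integral_complex_ofReal,
      integral_sub (integrable_observable hX hg hgL n) (integrable_const _)]
    simp

lemma tailSum_centered (hX : ∀ n, Measurable (X n)) (hg : ∀ n, Measurable (g n))
    (hgL : ∀ n ω, |g n (X n ω)| ≤ L) (N : ℕ) (ω : Ω) :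
    tailSum (fun m => (centered μ X g L m (X m ω) : ℂ)) 0 N =
      ((partialSum X g N ω - ∫ ω', partialSum X g N ω' ∂μ : ℝ) : ℂ) := by
  simp only [tailSum_zero_eq_sum_Icc, centered_apply hgL, partialSum]
  rw [integral_finsetSum _ fun n _ => integrable_observable hX hg hgL n, ← sum_sub_distrib,
    Complex.ofReal_sum]

lemma IsDoeblinChain.exists_mgf_partialSum_eq {κ : ℕ → Kernel E E} [∀ n, IsMarkovKernel (κ n)]
    {c : ℝ} (h : IsDoeblinChain μ X κ c) (hg : ∀ n, Measurable (g n))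
    (hgL : ∀ n ω, |g n (X n ω)| ≤ L) :
    ∃ ρ B : ℝ, 0 < ρ ∧ ∀ N, ∃ q, IsBoundedHolomorphic ρ B q ∧ ∀ z ∈ Metric.ball (0 : ℂ) ρ,
      ∫ ω, Complex.exp (z * ((partialSum X g N ω - ∫ ω', partialSum X g N ω' ∂μ : ℝ) : ℂ)) ∂μ =
        Complex.exp ((variance (partialSum X g N) μ : ℝ) * z ^ 2 / 2 +
          (variance (partialSum X g N) μ : ℝ) * z ^ 3 * q z) := by
  obtain ⟨ρ, B, hρ, hexpansion⟩ :=
    h.exists_tailMGF_eq (isCenteredBounded_centered h.measurable hg hgL)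
  refine ⟨ρ, B, hρ, fun N => (hexpansion 0 N).imp fun q hq => ⟨hq.1, fun z hz => ?_⟩⟩
  have hmgf := hq.2 z hz
  simp only [tailMGF, tailSum_centered h.measurable hg hgL, ← Complex.ofReal_pow,
    integral_complex_ofReal, Complex.norm_real, Real.norm_eq_abs, sq_abs] at hmgf
  rw [hmgf, variance_eq_integral (measurable_partialSum h.measurable hg N).aemeasurable]

end Centering

/-! ### The contribution of zero -/

lemma partialSum_intCast {Ω' F : Type*} (X : ℕ → Ω' → F) (f : ℕ → F → ℤ) (N : ℕ) (ω : Ω') :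
    partialSum X (fun n x => (f n x : ℝ)) N ω = (S X f N ω : ℝ) := by
  simp only [partialSum, S, Int.cast_sum]

lemma exists_truncation_of_bounds {P : ℕ → ℕ → Polynomial ℝ} {d : ℕ → ℕ} {B : ℕ → ℝ}
    (hdeg : ∀ b N, (P b N).natDegree ≤ d b) (hcoeff : ∀ b N i, |(P b N).coeff i| ≤ B b) (r : ℕ) :
    ∃ (D : ℕ) (Cb : ℝ) (Q : ℕ → ℕ → Polynomial ℝ), (∀ b N, (Q b N).natDegree ≤ D) ∧
      (∀ b N i, |(Q b N).coeff i| ≤ Cb) ∧ ∀ b ∈ Icc 1 r, Q b = P b := by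
  have hB (b : ℕ) : 0 ≤ B b := (abs_nonneg _).trans (hcoeff b 0 0)
  refine ⟨∑ b ∈ Icc 1 r, d b, ∑ b ∈ Icc 1 r, B b, fun b => if b ∈ Icc 1 r then P b else 0,
    fun b N => ?_, fun b N i => ?_, fun b hb => if_pos hb⟩
  · dsimp only
    split_ifs with hb
    · exact (hdeg b N).trans (single_le_sum (fun _ _ => Nat.zero_le _) hb)
    · simp
  · dsimp only
    split_ifs with hb
    · exact (hcoeff b N i).trans (single_le_sum (fun b _ => hB b) hb)
    · simpa using sum_nonneg fun b _ => hB b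

theorem contribution_of_zero_general (μ : Measure Ω) [IsProbabilityMeasure μ] (X : ℕ → Ω → E)
    (κ : ℕ → Kernel E E) [∀ n, IsMarkovKernel (κ n)] (c : ℝ) (hchain : IsDoeblinChain μ X κ c)
    (g : ℕ → E → ℝ) (L : ℝ) (hg : ∀ n, Measurable (g n)) (hgL : ∀ n ω, |g n (X n ω)| ≤ L)
    (a σ : ℕ → ℝ) (ha : ∀ N, a N = ∫ ω, partialSum X g N ω ∂μ)
    (hσ : ∀ N, σ N = Real.sqrt (variance (partialSum X g N) μ))
    (htop : Tendsto σ atTop atTop) :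
    ∃ (P : ℕ → ℕ → Polynomial ℝ) (B : ℕ → ℝ) (δ₀ : ℝ), 0 < δ₀ ∧
      (∀ b N, (P b N).natDegree ≤ 3 * b) ∧
      (∀ b N i, |(P b N).coeff i| ≤ B b) ∧
      ∀ r δ, 0 < δ → δ ≤ δ₀ → ∀ ε > 0, ∃ N₀, ∀ N ≥ N₀, ∀ k : ℝ,
        ‖(∫ t in (-δ)..δ, Complex.exp (-(Complex.I * (t : ℂ) * (k : ℂ))) *
              ∫ ω, Complex.exp (Complex.I * (t : ℂ) * (partialSum X g N ω : ℂ)) ∂μ) -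
            ((∑ b ∈ Icc 1 r, (σ N)⁻¹ ^ b * (P b N).eval ((k - a N) / σ N) *
              gaussDensity ((k - a N) / σ N) : ℝ) : ℂ)‖ ≤ ε * (σ N)⁻¹ ^ r := by
  obtain ⟨ρ, B, hρ, hexpansion⟩ := hchain.exists_mgf_partialSum_eq hg hgL
  choose q hq hmgf using hexpansion
  set A := max 1 (max (2 / ρ) B)
  have hA1 : 1 ≤ A := le_max_left _ _
  have hAρ : 2 / ρ ≤ A := (le_max_left _ _).trans (le_max_right _ _)
  have hqA (N : ℕ) : IsBoundedHolomorphic ρ A (q N) :=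
    (hq N).mono ((le_max_right _ _).trans (le_max_right _ _))
  have hσ2 (N : ℕ) : (variance (partialSum X g N) μ : ℝ) = σ N ^ 2 := by
    rw [hσ, Real.sq_sqrt (variance_nonneg _ _)]
  simp only [← ha, hσ2, Complex.ofReal_pow] at hmgf
  refine ⟨fun b N => edgePoly (q N) (b - 1), fun b => edgePolyBound A (b - 1),
    min (ρ / 2) (1 / (4 * A)), by positivity, fun b N => ?_,
    fun b N i => abs_coeff_edgePoly_le hρ hAρ (hqA N) _ i, fun r δ hδ hδ₀ ε hε => ?_⟩
  · exact (natDegree_edgePoly_le _ _).trans (by omega)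
  · obtain ⟨hδρ, hδA⟩ := le_min_iff.1 hδ₀
    exact edgeworth_of_mgf_expansion hρ hAρ hA1 hqA hmgf htop r hδ (by linarith) hδA hε

/-- Proposition 4.1. There are polynomials `P_{0,b,N}` with coefficients
uniformly bounded in `N` such that, for every `r ≥ 1`, if `δ > 0` is small enough then,
uniformly in `k ∈ ℤ`,
`∫_{-δ}^{δ} e^{-itk} 𝔼(e^{itS_N}) dt
  = ∑_{b=1}^r σ_N^{-b} P_{0,b,N}((k-a_N)/σ_N) 𝔤((k-a_N)/σ_N) + o(σ_N^{-r})`. -/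
theorem contribution_of_zero
    (μ : Measure Ω) (X : ℕ → Ω → E) (κ : ℕ → Kernel E E) (f : ℕ → E → ℤ)
    (C : ℝ) (K : ℕ) (hC : 1 < C) (hK : 1 ≤ K)
    (hchain : UEChain μ X κ C) (hf : ∀ n, Measurable (f n))
    (hbound : ∀ n ω, |f n (X n ω)| ≤ (K : ℤ))
    (hV : Tendsto (fun N => VN μ X f N) atTop atTop) :
    ∀ r : ℕ, 1 ≤ r →
      ∃ (D : ℕ) (Cb : ℝ) (P : ℕ → ℕ → Polynomial ℝ) (δ₀ : ℝ),
        0 < δ₀ ∧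
        (∀ b N, (P b N).natDegree ≤ D) ∧
        (∀ b N i, |(P b N).coeff i| ≤ Cb) ∧
        ∀ δ : ℝ, 0 < δ → δ ≤ δ₀ →
          ∀ ε > 0, ∃ N₀, ∀ N ≥ N₀, ∀ k : ℤ,
            ‖(∫ t in (-δ)..δ, Complex.exp (-(Complex.I * (t : ℂ) * (k : ℂ))) *
                  ∫ ω, Complex.exp (Complex.I * (t : ℂ) * ((S X f N ω : ℤ) : ℂ)) ∂μ) -
                (((∑ b ∈ Finset.Icc 1 r, (sigN μ X f N)⁻¹ ^ b *
                    (P b N).eval (((k : ℝ) - meanS μ X f N) / sigN μ X f N) *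
                    gaussDensity (((k : ℝ) - meanS μ X f N) / sigN μ X f N) : ℝ)) : ℂ)‖
              ≤ ε * (sigN μ X f N)⁻¹ ^ r := by
  intro r _
  have := hchain.1
  have := hchain.2.2.1
  have hfK (n : ℕ) (ω : Ω) : |(f n (X n ω) : ℝ)| ≤ K := by exact_mod_cast hbound n ω
  obtain ⟨P, B, δ₀, hδ₀, hdeg, hcoeff, hexpansion⟩ :=
    contribution_of_zero_general μ X κ C⁻¹ (hchain.isDoeblinChain (by linarith))
      (fun n x => f n x) K (fun n => measurable_from_top.comp (hf n)) hfK (meanS μ X f)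
      (sigN μ X f) (fun N => by simp only [meanS, partialSum_intCast])
      (fun N => by simp only [sigN, VN, ← partialSum_intCast])
      (Real.tendsto_sqrt_atTop.comp hV)
  obtain ⟨D, Cb, Q, hD, hCb, hQ⟩ := exists_truncation_of_bounds hdeg hcoeff r
  refine ⟨D, Cb, Q, δ₀, hδ₀, hD, hCb, fun δ hδ hδδ₀ ε hε => ?_⟩
  obtain ⟨N₀, hN₀⟩ := hexpansion r δ hδ hδδ₀ ε hε
  refine ⟨N₀, fun N hN k => ?_⟩
  rw [sum_congr rfl fun b hb => by rw [hQ b hb]]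
  simpa only [partialSum_intCast, Complex.ofReal_intCast] using hN₀ N hN k

end EdgeworthMC
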